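/- arXiv:quant-ph/0407049 — 5 statements merged into one kernel-verified Lean document; each statement's English description precedes it below -/
import Mathlib

section
/- Let d_A ≥ 3. The function mapping a unit vector φ ∈ C^{d_A} ⊗ C^{d_B} to the von Neumann entropy S(φ_A) of its reduced density matrix φ_A = Tr_B |φ⟩⟨φ| is Lipschitz with constant at most √8 · log₂ d_A with respect to the Euclidean norm. -/
open scoped BigOperators ComplexOrder
open Matrix

noncomputable section

namespace QIT

variable {n : Type*} [Fintype n] [DecidableEq n]

/-- Density matrix of a pure state given by a unit vector. -/
def pureDM (φ : EuclideanSpace ℂ n) : Matrix n n ℂ :=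
  Matrix.of fun i j => φ i * (starRingEnd ℂ) (φ j)

/-- A density matrix: positive semidefinite with unit trace. -/
def DensityMatrix (ρ : Matrix n n ℂ) : Prop := ρ.PosSemidef ∧ ρ.trace = 1

/-- Von Neumann entropy (base 2), via the eigenvalues. -/
def vNEntropy (ρ : Matrix n n ℂ) : ℝ :=
  if h : ρ.IsHermitian then ∑ i, -(h.eigenvalues i * Real.logb 2 (h.eigenvalues i)) else 0

/-- Trace norm of a Hermitian matrix, via eigenvalues. -/
def traceNorm (M : Matrix n n ℂ) : ℝ :=
  if h : M.IsHermitian then ∑ i, |h.eigenvalues i| else 0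

/-- Operator (spectral) norm. -/
def opNorm (M : Matrix n n ℂ) : ℝ := ‖Matrix.toEuclideanCLM (𝕜 := ℂ) M‖

/-- Apply a real function to a Hermitian matrix via the spectral theorem. -/
def hermApply (f : ℝ → ℝ) (M : Matrix n n ℂ) : Matrix n n ℂ :=
  if h : M.IsHermitian then
    (h.eigenvectorUnitary : Matrix n n ℂ) * Matrix.diagonal (fun i => (f (h.eigenvalues i) : ℂ)) *
      (h.eigenvectorUnitary : Matrix n n ℂ)ᴴ
  else 0

/-- Matrix base-2 logarithm of a Hermitian matrix. -/
def mlog2 : Matrix n n ℂ → Matrix n n ℂ := hermApply (Real.logb 2)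

/-- Matrix square root of a positive semidefinite matrix. -/
def msqrt : Matrix n n ℂ → Matrix n n ℂ := hermApply Real.sqrt

/-- Quantum relative entropy `D(ρ‖σ) = Tr ρ (log₂ ρ − log₂ σ)`. -/
def relEnt (ρ σ : Matrix n n ℂ) : ℝ := ((ρ * (mlog2 ρ - mlog2 σ)).trace).re

/-- Uhlmann fidelity `F(ρ,σ) = (Tr √(√ρ σ √ρ))²`. -/
def fidelity (ρ σ : Matrix n n ℂ) : ℝ := (((msqrt (msqrt ρ * σ * msqrt ρ)).trace).re) ^ 2

/-- A projector. -/
def Projector (P : Matrix n n ℂ) : Prop := P.IsHermitian ∧ P * P = P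

variable {dA dB : ℕ}

/-- Partial trace over the second factor. -/
def ptraceB (ρ : Matrix (Fin dA × Fin dB) (Fin dA × Fin dB) ℂ) : Matrix (Fin dA) (Fin dA) ℂ :=
  Matrix.of fun a a' => ∑ b, ρ (a, b) (a', b)

/-- Partial trace over the first factor. -/
def ptraceA (ρ : Matrix (Fin dA × Fin dB) (Fin dA × Fin dB) ℂ) : Matrix (Fin dB) (Fin dB) ℂ :=
  Matrix.of fun b b' => ∑ a, ρ (a, b) (a, b')

/-- Kronecker (tensor) product of operators on the two factors. -/
def kron (P : Matrix (Fin dA) (Fin dA) ℂ) (Q : Matrix (Fin dB) (Fin dB) ℂ) :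
    Matrix (Fin dA × Fin dB) (Fin dA × Fin dB) ℂ :=
  Matrix.of fun x y => P x.1 y.1 * Q x.2 y.2

/-- Partial transpose on the second factor. -/
def ptransposeB (ρ : Matrix (Fin dA × Fin dB) (Fin dA × Fin dB) ℂ) :
    Matrix (Fin dA × Fin dB) (Fin dA × Fin dB) ℂ :=
  Matrix.of fun x y => ρ (x.1, y.2) (y.1, x.2)

/-- Bipartite separability. -/
def Separable (ρ : Matrix (Fin dA × Fin dB) (Fin dA × Fin dB) ℂ) : Prop :=
  ∃ (m : ℕ) (p : Fin m → ℝ) (a : Fin m → Matrix (Fin dA) (Fin dA) ℂ)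
    (b : Fin m → Matrix (Fin dB) (Fin dB) ℂ),
    (∀ l, 0 ≤ p l) ∧ (∑ l, p l = 1) ∧
    (∀ l, (a l).PosSemidef ∧ (a l).trace = 1) ∧
    (∀ l, (b l).PosSemidef ∧ (b l).trace = 1) ∧
    ρ = ∑ l, (p l : ℂ) • kron (a l) (b l)

/-- Entanglement of formation. -/
def EoF (ρ : Matrix (Fin dA × Fin dB) (Fin dA × Fin dB) ℂ) : ℝ :=
  sInf { x : ℝ | ∃ (m : ℕ) (p : Fin m → ℝ) (φ : Fin m → EuclideanSpace ℂ (Fin dA × Fin dB)),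
    (∀ l, 0 ≤ p l) ∧ (∑ l, p l = 1) ∧ (∀ l, ‖φ l‖ = 1) ∧
    (ρ = ∑ l, (p l : ℂ) • pureDM (φ l)) ∧
    x = ∑ l, p l * vNEntropy (ptraceB (pureDM (φ l))) }

end QIT

theorem sq_le_one_add_exp {z : ℝ} (hz : 0 ≤ z) : z ^ 2 ≤ 1 + Real.exp z := by
  have := Real.sum_le_exp_of_nonneg hz 4
  simp [Finset.sum_range_succ, Nat.factorial] at this
  nlinarith [mul_nonneg hz (sq_nonneg (z - 3/2))]

theorem sq_bound {L z : ℝ} (hL : 1 ≤ L) (hz : -L ≤ z) :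
    (L + z - 1) ^ 2 ≤ L ^ 2 * (1 + Real.exp z) := by
  have he := Real.exp_pos z
  by_cases h1 : z ≤ 1
  · have : (L + z - 1) ^ 2 ≤ L ^ 2 := by
      apply sq_le_sq'  <;> linarith
    nlinarith [mul_pos (show (0:ℝ) < L ^ 2 by positivity) he]
  · push Not at h1
    have h2 : (L + z - 1) ^ 2 ≤ (L * z) ^ 2 := by
      apply sq_le_sq' <;> nlinarith
    have h3 := sq_le_one_add_exp (z := z) (by linarith)
    nlinarith [sq_nonneg L]

theorem plog_bound {d : ℕ} (hd : 3 ≤ d) {p : ℝ} (hp0 : 0 ≤ p) (hp1 : p ≤ 1) :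
    p * (Real.log p + 1) ^ 2 ≤ Real.log d ^ 2 * (p + 1 / d) := by
  rcases hp0.eq_or_lt with rfl | hp
  · simp; positivity
  have hdpos : (0:ℝ) < d := by positivity
  have hL : 1 ≤ Real.log d := by
    rw [Real.le_log_iff_exp_le hdpos]
    have := Real.exp_one_lt_d9
    have : (3:ℝ) ≤ d := by exact_mod_cast hd
    linarith
  have hlp : Real.log p ≤ 0 := Real.log_nonpos hp0 hp1
  have := sq_bound hL (z := -Real.log p - Real.log d) (by linarith)
  have he : Real.exp (-Real.log p - Real.log d) = 1 / p / d := by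
    rw [Real.exp_sub, Real.exp_neg, Real.exp_log hp, Real.exp_log hdpos, one_div]
  rw [he] at this
  calc p * (Real.log p + 1) ^ 2 = p * (Real.log d + (-Real.log p - Real.log d) - 1) ^ 2 := by ring
    _ ≤ p * (Real.log d ^ 2 * (1 + 1 / p / d)) := by gcongr
    _ = _ := by field_simp

theorem hasDerivAt_G (x : ℝ) :
    HasDerivAt (fun x : ℝ => Real.negMulLog (x ^ 2)) (-(2 * x * (Real.log (x ^ 2) + 1))) x := by
  by_cases hx : x = 0
  · subst hx
    have h : (fun x : ℝ => Real.negMulLog (x ^ 2)) = fun x => x * (2 * Real.negMulLog x) := by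
      ext x; simp [Real.negMulLog]; ring
    rw [h, hasDerivAt_iff_tendsto_slope]
    have hc : Continuous (fun x => 2 * Real.negMulLog x) := by
      have := Real.continuous_negMulLog
      fun_prop
    have h2 := (hc.tendsto 0).mono_left (nhdsWithin_le_nhds (s := {0}ᶜ))
    simp only [Real.negMulLog_zero, mul_zero, zero_mul, neg_zero] at h2 ⊢
    refine h2.congr' ?_
    filter_upwards [self_mem_nhdsWithin] with y hy
    have hy : y ≠ 0 := hy
    simp [slope_def_field]
    field_simp
  · have h1 := (Real.hasDerivAt_negMulLog (x := x ^ 2) (by positivity)).comp x (hasDerivAt_pow 2 x)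
    refine h1.congr_deriv ?_
    simp; ring

theorem classical_lip {d : ℕ} (hd : 3 ≤ d) (r s : Fin d → ℝ) (hr : ∑ i, r i ^ 2 = 1)
    (hs : ∑ i, s i ^ 2 = 1) :
    |∑ i, Real.negMulLog (s i ^ 2) - ∑ i, Real.negMulLog (r i ^ 2)| ≤
      Real.sqrt 8 * Real.log d * Real.sqrt (∑ i, (s i - r i) ^ 2) := by
  have hdpos : (0:ℝ) < d := by positivity
  let x : ℝ → Fin d → ℝ := fun t i => r i + t * (s i - r i)
  have hx : ∀ t i, HasDerivAt (fun t => x t i) (s i - r i) t := by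
    intro t i
    simpa [x] using ((hasDerivAt_id t).mul_const (s i - r i)).const_add (r i)
  have hF : ∀ t, HasDerivAt (fun t => ∑ i, Real.negMulLog (x t i ^ 2))
      (∑ i, -(2 * x t i * (Real.log (x t i ^ 2) + 1)) * (s i - r i)) t := by
    intro t
    apply HasDerivAt.fun_sum
    intro i _
    exact (hasDerivAt_G (x t i)).comp t (hx t i)
  have hq : ∀ t ∈ Set.Ico (0:ℝ) 1, ∑ i, x t i ^ 2 ≤ 1 := by
    intro t ht
    calc ∑ i, x t i ^ 2 ≤ ∑ i, ((1 - t) * r i ^ 2 + t * s i ^ 2) := by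
          apply Finset.sum_le_sum
          intro i _
          simp only [x]
          nlinarith [mul_nonneg (mul_nonneg ht.1 (sub_nonneg.2 ht.2.le)) (sq_nonneg (s i - r i))]
      _ = 1 := by rw [Finset.sum_add_distrib, ← Finset.mul_sum, ← Finset.mul_sum, hr, hs]; ring
  have hb : ∀ t ∈ Set.Ico (0:ℝ) 1,
      ‖∑ i, -(2 * x t i * (Real.log (x t i ^ 2) + 1)) * (s i - r i)‖ ≤
      Real.sqrt 8 * Real.log d * Real.sqrt (∑ i, (s i - r i) ^ 2) := by
    intro t ht
    have hq1 : ∀ i, x t i ^ 2 ≤ 1 := fun i =>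
      (Finset.single_le_sum (f := fun i => x t i ^ 2) (fun i _ => sq_nonneg _)
        (Finset.mem_univ i)).trans (hq t ht)
    have hg : ∑ i, (-(2 * x t i * (Real.log (x t i ^ 2) + 1))) ^ 2 ≤ 8 * Real.log d ^ 2 := by
      calc ∑ i, (-(2 * x t i * (Real.log (x t i ^ 2) + 1))) ^ 2
          = ∑ i, 4 * (x t i ^ 2 * (Real.log (x t i ^ 2) + 1) ^ 2) := by
            congr 1; ext i; ring
        _ ≤ ∑ i, 4 * (Real.log d ^ 2 * (x t i ^ 2 + 1 / d)) := by
            apply Finset.sum_le_sum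
            intro i _
            have := plog_bound hd (sq_nonneg (x t i)) (hq1 i)
            linarith
        _ = 4 * (Real.log d ^ 2 * (∑ i, x t i ^ 2 + 1)) := by
            rw [← Finset.mul_sum, ← Finset.mul_sum, Finset.sum_add_distrib]
            congr 3
            simp; field_simp
        _ ≤ 4 * (Real.log d ^ 2 * (1 + 1)) := by
            have := hq t ht
            gcongr
        _ = _ := by ring
    have hlog : 0 ≤ Real.log d := Real.log_natCast_nonneg d
    have hcs := Finset.sum_mul_sq_le_sq_mul_sq Finset.univ
      (fun i => -(2 * x t i * (Real.log (x t i ^ 2) + 1))) (fun i => s i - r i)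
    rw [Real.norm_eq_abs]
    apply abs_le_of_sq_le_sq _ (by positivity)
    rw [mul_pow, mul_pow, Real.sq_sqrt (by norm_num), Real.sq_sqrt (by positivity)]
    refine hcs.trans ?_
    gcongr
  have := norm_image_sub_le_of_norm_deriv_le_segment_01' (fun t _ => (hF t).hasDerivWithinAt) hb
  simpa [x] using this

theorem row_sum_normSq {d : ℕ} {W : Matrix (Fin d) (Fin d) ℂ} (h : W * Wᴴ = 1) (i : Fin d) :
    ∑ j, Complex.normSq (W i j) = 1 := by
  have := congrFun (congrFun h i) i
  simp only [Matrix.mul_apply, Matrix.conjTranspose_apply, Matrix.one_apply_eq] at this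
  have h2 : ((∑ j, Complex.normSq (W i j) : ℝ) : ℂ) = 1 := by
    rw [← this]; push_cast
    exact Finset.sum_congr rfl fun j _ => Complex.normSq_eq_conj_mul_self.trans (mul_comm _ _)
  exact_mod_cast h2

theorem col_sum_normSq {d : ℕ} {W : Matrix (Fin d) (Fin d) ℂ} (h : Wᴴ * W = 1) (j : Fin d) :
    ∑ i, Complex.normSq (W i j) = 1 := by
  have := row_sum_normSq (W := Wᴴ) (by simpa using h) j
  simpa [Matrix.conjTranspose_apply] using this

theorem diag_conj {d : ℕ} (W : Matrix (Fin d) (Fin d) ℂ) (l : Fin d → ℝ) (i : Fin d) :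
    (W * Matrix.diagonal (fun j => (l j : ℂ)) * Wᴴ) i i
      = ((∑ j, Complex.normSq (W i j) * l j : ℝ) : ℂ) := by
  rw [Matrix.mul_apply]
  push_cast
  refine Finset.sum_congr rfl fun j _ => ?_
  rw [Matrix.mul_diagonal, Matrix.conjTranspose_apply, Complex.normSq_eq_conj_mul_self]
  simp; ring

theorem schur_entropy {d : ℕ} {W : Matrix (Fin d) (Fin d) ℂ} (h1 : W * Wᴴ = 1) (h2 : Wᴴ * W = 1)
    (l : Fin d → ℝ) (hl : ∀ i, 0 ≤ l i) :
    ∑ j, Real.negMulLog (l j) ≤ ∑ i, Real.negMulLog (∑ j, Complex.normSq (W i j) * l j) := by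
  calc ∑ j, Real.negMulLog (l j)
      = ∑ j, (∑ i, Complex.normSq (W i j)) * Real.negMulLog (l j) := by
        simp [col_sum_normSq h2]
    _ = ∑ i, ∑ j, Complex.normSq (W i j) * Real.negMulLog (l j) := by
        rw [Finset.sum_comm]; simp [Finset.sum_mul]
    _ ≤ _ := by
        apply Finset.sum_le_sum
        intro i _
        have := Real.concaveOn_negMulLog.le_map_sum (t := Finset.univ)
          (w := fun j => Complex.normSq (W i j)) (p := l)
          (fun j _ => Complex.normSq_nonneg _) (row_sum_normSq h1 i) (fun j _ => hl j)
        simpa using this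

/-- The coefficient matrix of a bipartite vector. -/
def coefMat {dA dB : ℕ} (φ : EuclideanSpace ℂ (Fin dA × Fin dB)) : Matrix (Fin dA) (Fin dB) ℂ :=
  Matrix.of fun a b => φ (a, b)

theorem ptraceB_pureDM {dA dB : ℕ} (φ : EuclideanSpace ℂ (Fin dA × Fin dB)) :
    QIT.ptraceB (QIT.pureDM φ) = coefMat φ * (coefMat φ)ᴴ := by
  ext a a'
  simp [QIT.ptraceB, QIT.pureDM, coefMat, Matrix.mul_apply]

/-- Norm of the `i`-th row after the local unitary. -/
def rowNorm {dA dB : ℕ} (U : Matrix (Fin dA) (Fin dA) ℂ)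
    (φ : EuclideanSpace ℂ (Fin dA × Fin dB)) (i : Fin dA) : ℝ :=
  ‖(WithLp.toLp 2 ((Uᴴ * coefMat φ) i) : EuclideanSpace ℂ (Fin dB))‖

theorem rowNorm_sq {dA dB : ℕ} (U : Matrix (Fin dA) (Fin dA) ℂ)
    (φ : EuclideanSpace ℂ (Fin dA × Fin dB)) (i : Fin dA) :
    ((rowNorm U φ i ^ 2 : ℝ) : ℂ) = (Uᴴ * QIT.ptraceB (QIT.pureDM φ) * U) i i := by
  have : Uᴴ * QIT.ptraceB (QIT.pureDM φ) * U = (Uᴴ * coefMat φ) * (Uᴴ * coefMat φ)ᴴ := by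
    rw [ptraceB_pureDM, Matrix.conjTranspose_mul, Matrix.conjTranspose_conjTranspose]
    simp only [Matrix.mul_assoc]
  rw [this, Matrix.mul_apply, rowNorm, EuclideanSpace.norm_sq_eq]
  push_cast
  refine Finset.sum_congr rfl fun b _ => ?_
  rw [Matrix.conjTranspose_apply]
  exact (Complex.mul_conj' _).symm

theorem sum_rowNorm_sq {dA dB : ℕ} {U : Matrix (Fin dA) (Fin dA) ℂ} (hU : U * Uᴴ = 1)
    (φ : EuclideanSpace ℂ (Fin dA × Fin dB)) : ∑ i, rowNorm U φ i ^ 2 = ‖φ‖ ^ 2 := by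
  have h : ((∑ i, rowNorm U φ i ^ 2 : ℝ) : ℂ) = ((‖φ‖ ^ 2 : ℝ) : ℂ) := by
    rw [Complex.ofReal_sum, Finset.sum_congr rfl fun i _ => rowNorm_sq U φ i]
    change Matrix.trace _ = _
    rw [Matrix.mul_assoc, Matrix.trace_mul_comm, Matrix.mul_assoc, hU, Matrix.mul_one,
      EuclideanSpace.norm_sq_eq, Fintype.sum_prod_type]
    push_cast
    simp [Matrix.trace, QIT.ptraceB, QIT.pureDM, Complex.mul_conj']
  exact_mod_cast h

theorem rowNorm_sub {dA dB : ℕ} (U : Matrix (Fin dA) (Fin dA) ℂ)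
    (φ ψ : EuclideanSpace ℂ (Fin dA × Fin dB)) (i : Fin dA) :
    (rowNorm U φ i - rowNorm U ψ i) ^ 2 ≤ rowNorm U (φ - ψ) i ^ 2 := by
  have h : coefMat (φ - ψ) = coefMat φ - coefMat ψ := by
    ext a b; simp [coefMat]
  rw [sq_le_sq, abs_of_nonneg (show 0 ≤ rowNorm U (φ - ψ) i from norm_nonneg _)]
  refine (abs_norm_sub_norm_le _ _).trans (le_of_eq ?_)
  rw [rowNorm, h, Matrix.mul_sub]
  rfl

theorem vNEntropy_eq {d : ℕ} {A : Matrix (Fin d) (Fin d) ℂ} (h : A.IsHermitian) :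
    QIT.vNEntropy A = (∑ i, Real.negMulLog (h.eigenvalues i)) / Real.log 2 := by
  rw [QIT.vNEntropy, dif_pos h, Finset.sum_div]
  refine Finset.sum_congr rfl fun i _ => ?_
  rw [Real.negMulLog, Real.logb]; ring

theorem entropy_one_sided (dA dB : ℕ) (hA : 3 ≤ dA)
    (φ ψ : EuclideanSpace ℂ (Fin dA × Fin dB)) (hφ : ‖φ‖ = 1) (hψ : ‖ψ‖ = 1) :
    QIT.vNEntropy (QIT.ptraceB (QIT.pureDM ψ)) - QIT.vNEntropy (QIT.ptraceB (QIT.pureDM φ))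
      ≤ Real.sqrt 8 * Real.logb 2 dA * ‖φ - ψ‖ := by
  have psd : ∀ χ : EuclideanSpace ℂ (Fin dA × Fin dB),
      (QIT.ptraceB (QIT.pureDM χ)).PosSemidef := by
    intro χ; rw [ptraceB_pureDM]; exact Matrix.posSemidef_self_mul_conjTranspose _
  have hh := (psd φ).isHermitian
  have hk := (psd ψ).isHermitian
  rw [vNEntropy_eq hh, vNEntropy_eq hk]
  obtain ⟨U, hU⟩ : ∃ U : Matrix (Fin dA) (Fin dA) ℂ, U = hh.eigenvectorUnitary := ⟨_, rfl⟩
  obtain ⟨V, hV⟩ : ∃ V : Matrix (Fin dA) (Fin dA) ℂ, V = hk.eigenvectorUnitary := ⟨_, rfl⟩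
  have hU1 : U * Uᴴ = 1 := by rw [hU]; exact Unitary.coe_mul_star_self hh.eigenvectorUnitary
  have hU2 : Uᴴ * U = 1 := by rw [hU]; exact Unitary.coe_star_mul_self hh.eigenvectorUnitary
  have hV1 : V * Vᴴ = 1 := by rw [hV]; exact Unitary.coe_mul_star_self hk.eigenvectorUnitary
  have hV2 : Vᴴ * V = 1 := by rw [hV]; exact Unitary.coe_star_mul_self hk.eigenvectorUnitary
  have sφ : QIT.ptraceB (QIT.pureDM φ)
      = U * Matrix.diagonal (fun j => (hh.eigenvalues j : ℂ)) * Uᴴ := by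
    rw [hU]; exact hh.spectral_theorem
  have sψ : QIT.ptraceB (QIT.pureDM ψ)
      = V * Matrix.diagonal (fun j => (hk.eigenvalues j : ℂ)) * Vᴴ := by
    rw [hV]; exact hk.spectral_theorem
  have eφ : ∀ i, rowNorm U φ i ^ 2 = hh.eigenvalues i := by
    intro i
    have h1 := rowNorm_sq U φ i
    have h2 : Uᴴ * QIT.ptraceB (QIT.pureDM φ) * U
        = Matrix.diagonal (fun j => (hh.eigenvalues j : ℂ)) := by
      calc Uᴴ * QIT.ptraceB (QIT.pureDM φ) * U
          = Uᴴ * (U * Matrix.diagonal (fun j => (hh.eigenvalues j : ℂ)) * Uᴴ) * U := by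
            rw [← sφ]
        _ = (Uᴴ * U) * Matrix.diagonal (fun j => (hh.eigenvalues j : ℂ)) * (Uᴴ * U) := by
            simp only [Matrix.mul_assoc]
        _ = _ := by rw [hU2, Matrix.one_mul, Matrix.mul_one]
    rw [h2, Matrix.diagonal_apply_eq] at h1
    exact_mod_cast h1
  have eψ : ∀ i, rowNorm U ψ i ^ 2
      = ∑ j, Complex.normSq ((Uᴴ * V) i j) * hk.eigenvalues j := by
    intro i
    have h1 := rowNorm_sq U ψ i
    have h2 : Uᴴ * QIT.ptraceB (QIT.pureDM ψ) * U
        = (Uᴴ * V) * Matrix.diagonal (fun j => (hk.eigenvalues j : ℂ)) * (Uᴴ * V)ᴴ := by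
      calc Uᴴ * QIT.ptraceB (QIT.pureDM ψ) * U
          = Uᴴ * (V * Matrix.diagonal (fun j => (hk.eigenvalues j : ℂ)) * Vᴴ) * U := by
            rw [← sψ]
        _ = _ := by
            rw [Matrix.conjTranspose_mul, Matrix.conjTranspose_conjTranspose]
            simp only [Matrix.mul_assoc]
    rw [h2, diag_conj] at h1
    exact_mod_cast h1
  have W1 : (Uᴴ * V) * (Uᴴ * V)ᴴ = 1 := by
    rw [Matrix.conjTranspose_mul, Matrix.conjTranspose_conjTranspose, Matrix.mul_assoc,
      ← Matrix.mul_assoc V, hV1, Matrix.one_mul, hU2]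
  have W2 : (Uᴴ * V)ᴴ * (Uᴴ * V) = 1 := mul_eq_one_comm.mp W1
  have hS := schur_entropy W1 W2 hk.eigenvalues (psd ψ).eigenvalues_nonneg
  have hc := classical_lip hA (rowNorm U φ) (rowNorm U ψ)
    (by rw [sum_rowNorm_sq hU1, hφ]; norm_num) (by rw [sum_rowNorm_sq hU1, hψ]; norm_num)
  simp only [eφ, eψ] at hc
  have hn : Real.sqrt (∑ i, (rowNorm U ψ i - rowNorm U φ i) ^ 2) ≤ ‖φ - ψ‖ := by
    apply Real.sqrt_le_iff.2 ⟨norm_nonneg _, ?_⟩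
    rw [norm_sub_rev, ← sum_rowNorm_sq hU1]
    exact Finset.sum_le_sum fun i _ => rowNorm_sub U ψ φ i
  have hlog : 0 ≤ Real.log dA := Real.log_natCast_nonneg dA
  have hfin : ∑ i, Real.negMulLog (hk.eigenvalues i) - ∑ i, Real.negMulLog (hh.eigenvalues i)
      ≤ Real.sqrt 8 * Real.log dA * ‖φ - ψ‖ := by
    have h3 := (le_abs_self _).trans hc
    have h4 : Real.sqrt 8 * Real.log dA * Real.sqrt (∑ i, (rowNorm U ψ i - rowNorm U φ i) ^ 2)
        ≤ Real.sqrt 8 * Real.log dA * ‖φ - ψ‖ := by gcongr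
    linarith
  have hl2 : 0 < Real.log 2 := Real.log_pos (by norm_num)
  calc _ = (∑ i, Real.negMulLog (hk.eigenvalues i) - ∑ i, Real.negMulLog (hh.eigenvalues i))
        / Real.log 2 := by ring
    _ ≤ (Real.sqrt 8 * Real.log dA * ‖φ - ψ‖) / Real.log 2 := by gcongr
    _ = _ := by rw [Real.logb]; ring

theorem entanglement_entropy_lipschitz (dA dB : ℕ) (hA : 3 ≤ dA) :
    ∀ φ ψ : EuclideanSpace ℂ (Fin dA × Fin dB), ‖φ‖ = 1 → ‖ψ‖ = 1 →
      |QIT.vNEntropy (QIT.ptraceB (QIT.pureDM φ)) - QIT.vNEntropy (QIT.ptraceB (QIT.pureDM ψ))|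
        ≤ Real.sqrt 8 * Real.logb 2 dA * ‖φ - ψ‖ := by
  intro φ ψ hφ hψ
  rw [abs_sub_le_iff]
  refine ⟨?_, entropy_one_sided dA dB hA φ ψ hφ hψ⟩
  rw [norm_sub_rev]
  exact entropy_one_sided dA dB hA ψ φ hψ hφ

end
end

section
/- For 0 < ε < 1, the set of unit vectors in C^{d_A} ⊗ C^{d_B} whose Schmidt rank is at most k admits an ε-net (in trace norm on the associated pure states) of cardinality at most (10/ε)^{2k(d_A + d_B)}. -/
open scoped BigOperators ComplexOrder
open Matrix

noncomputable section

namespace SchmidtNet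

open MeasureTheory Metric Module in
lemma card_le_of_sep {E : Type*} [NormedAddCommGroup E] [NormedSpace ℝ E] [FiniteDimensional ℝ E]
    (δ : ℝ) (hδ : 0 < δ) (s : Finset E) (hs : ∀ c ∈ s, ‖c‖ ≤ 1)
    (h : ∀ c ∈ s, ∀ d ∈ s, c ≠ d → δ ≤ ‖c - d‖) :
    (s.card : ℝ) ≤ (1 + 2 / δ) ^ finrank ℝ E := by
  borelize E
  let μ : Measure E := Measure.addHaar
  have hδ2 : 0 < δ / 2 := by positivity
  have ρpos : 0 < 1 + δ / 2 := by positivity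
  set A := ⋃ c ∈ s, ball (c : E) (δ / 2) with hA
  have D : Set.Pairwise (s : Set E) (Function.onFun Disjoint fun c => ball (c : E) (δ / 2)) := by
    rintro c hc d hd hcd
    apply ball_disjoint_ball
    rw [dist_eq_norm]
    have := h c hc d hd hcd
    linarith
  have A_subset : A ⊆ ball (0 : E) (1 + δ / 2) := by
    refine Set.iUnion₂_subset fun x hx => ?_
    apply ball_subset_ball'
    have := hs x hx
    rw [dist_zero_right]
    linarith
  have I :
    (s.card : ENNReal) * ENNReal.ofReal ((δ / 2) ^ finrank ℝ E) * μ (ball 0 1) ≤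
      ENNReal.ofReal ((1 + δ / 2) ^ finrank ℝ E) * μ (ball 0 1) :=
    calc
      (s.card : ENNReal) * ENNReal.ofReal ((δ / 2) ^ finrank ℝ E) * μ (ball 0 1) = μ A := by
        rw [hA, measure_biUnion_finset D fun c _ => measurableSet_ball]
        simp only [μ.addHaar_ball_of_pos _ hδ2]
        simp only [Finset.sum_const, nsmul_eq_mul, mul_assoc]
      _ ≤ μ (ball (0 : E) (1 + δ / 2)) := measure_mono A_subset
      _ = ENNReal.ofReal ((1 + δ / 2) ^ finrank ℝ E) * μ (ball 0 1) := by
        simp only [μ.addHaar_ball_of_pos _ ρpos]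
  have J : (s.card : ENNReal) * ENNReal.ofReal ((δ / 2) ^ finrank ℝ E)
      ≤ ENNReal.ofReal ((1 + δ / 2) ^ finrank ℝ E) :=
    (ENNReal.mul_le_mul_iff_left (measure_ball_pos _ _ zero_lt_one).ne' measure_ball_lt_top.ne).1 I
  have K := ENNReal.toReal_le_of_le_ofReal (pow_nonneg ρpos.le _) J
  rw [ENNReal.toReal_mul, ENNReal.toReal_natCast, ENNReal.toReal_ofReal (by positivity)] at K
  have e : (1 + 2 / δ) = (1 + δ / 2) / (δ / 2) := by field_simp; ring
  rw [e, div_pow, le_div_iff₀ (by positivity)]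
  exact K

open Module in
lemma exists_net {E : Type*} [NormedAddCommGroup E] [NormedSpace ℝ E] [FiniteDimensional ℝ E]
    (δ : ℝ) (hδ : 0 < δ) (S : Set E) (hS : ∀ c ∈ S, ‖c‖ ≤ 1) :
    ∃ N : Finset E, (∀ c ∈ N, c ∈ S) ∧ (N.card : ℝ) ≤ (1 + 2 / δ) ^ finrank ℝ E ∧
      ∀ x ∈ S, ∃ y ∈ N, ‖x - y‖ ≤ δ := by
  classical
  let P : Set ℕ := {m | ∃ s : Finset E, s.card = m ∧ (∀ c ∈ s, c ∈ S) ∧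
    ∀ c ∈ s, ∀ d ∈ s, c ≠ d → δ ≤ ‖c - d‖}
  have hne : P.Nonempty := ⟨0, ∅, by simp⟩
  have hb : BddAbove P := by
    refine ⟨⌈(1 + 2 / δ) ^ finrank ℝ E⌉₊, ?_⟩
    rintro m ⟨s, rfl, h1, h2⟩
    have := (card_le_of_sep δ hδ s (fun c hc => hS c (h1 c hc)) h2).trans (Nat.le_ceil _)
    exact_mod_cast this
  obtain ⟨s, hs, h1, h2⟩ := Nat.sSup_mem hne hb
  refine ⟨s, h1, card_le_of_sep δ hδ s (fun c hc => hS c (h1 c hc)) h2, ?_⟩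
  intro x hx
  by_contra! hcon
  have hxs : x ∉ s := fun hxs => by
    have := hcon x hxs
    simp at this
    linarith
  have : (insert x s).card ∈ P := by
    refine ⟨_, rfl, ?_, ?_⟩
    · intro c hc
      rcases Finset.mem_insert.1 hc with rfl | hc
      · exact hx
      · exact h1 c hc
    · intro c hc d hd hcd
      rcases Finset.mem_insert.1 hc with hc' | hc' <;>
        rcases Finset.mem_insert.1 hd with hd' | hd'
      · exact absurd (hc'.trans hd'.symm) hcd
      · rw [hc']; exact (hcon d hd').le
      · rw [hd', norm_sub_rev]; exact (hcon c hc').le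
      · exact h2 c hc' d hd' hcd
  have := le_csSup hb this
  rw [Finset.card_insert_of_notMem hxs] at this
  omega

lemma traceNorm_le {n : Type*} [Fintype n] [DecidableEq n] (φ ψ : EuclideanSpace ℂ n)
    (hφ : ‖φ‖ = 1) (hψ : ‖ψ‖ = 1) :
    QIT.traceNorm (QIT.pureDM φ - QIT.pureDM ψ) ≤ 2 * ‖φ - ψ‖ := by
  have hH : (QIT.pureDM φ - QIT.pureDM ψ).IsHermitian := by
    ext i j
    simp [QIT.pureDM, mul_comm]
  rw [QIT.traceNorm, dif_pos hH]
  set e := hH.eigenvectorBasis with he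
  have key : ∀ i, hH.eigenvalues i = ‖inner ℂ (e i) φ‖ ^ 2 - ‖inner ℂ (e i) ψ‖ ^ 2 := by
    intro i
    have aux : ∀ χ : EuclideanSpace ℂ n, star (⇑(e i)) ⬝ᵥ (QIT.pureDM χ *ᵥ ⇑(e i))
        = ((‖inner ℂ (e i) χ‖ ^ 2 : ℝ) : ℂ) := by
      intro χ
      have : QIT.pureDM χ = Matrix.vecMulVec (⇑χ) (star ⇑χ) := by
        ext a b; simp [QIT.pureDM, Matrix.vecMulVec]
      rw [this, Matrix.vecMulVec_mulVec, dotProduct_smul]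
      have h1 : star (⇑(e i)) ⬝ᵥ ⇑χ = inner ℂ (e i) χ := by
        rw [EuclideanSpace.inner_eq_star_dotProduct, dotProduct_comm]
      have h2 : star (⇑χ) ⬝ᵥ ⇑(e i) = inner ℂ χ (e i) := by
        rw [EuclideanSpace.inner_eq_star_dotProduct, dotProduct_comm]
      rw [h1, h2, ← inner_conj_symm χ (e i)]
      rw [op_smul_eq_smul, smul_eq_mul, mul_comm, Complex.mul_conj,
        Complex.normSq_eq_norm_sq]
    rw [hH.eigenvalues_eq, Matrix.sub_mulVec, dotProduct_sub, ← he, aux, aux]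
    rw [← Complex.ofReal_sub]
    exact Complex.ofReal_re _
  have hsum : ∀ χ : EuclideanSpace ℂ n, ∑ i, ‖inner ℂ (e i) χ‖ ^ 2 = ‖χ‖ ^ 2 :=
    fun χ => e.sum_sq_norm_inner_right χ
  have cs : ∀ χ : EuclideanSpace ℂ n, ‖χ‖ = 1 →
      ∑ i, ‖inner ℂ (e i) (φ - ψ)‖ * ‖inner ℂ (e i) χ‖ ≤ ‖φ - ψ‖ := by
    intro χ hχ
    refine (Real.sum_mul_le_sqrt_mul_sqrt _ _ _).trans ?_
    rw [hsum, hsum, hχ]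
    simp
  calc ∑ i, |hH.eigenvalues i|
      ≤ ∑ i, (‖inner ℂ (e i) (φ - ψ)‖ * ‖inner ℂ (e i) φ‖
          + ‖inner ℂ (e i) (φ - ψ)‖ * ‖inner ℂ (e i) ψ‖) := by
        refine Finset.sum_le_sum fun i _ => ?_
        rw [key, sq_sub_sq, abs_mul, abs_of_nonneg (by positivity), ← mul_add, mul_comm,
          inner_sub_right]
        gcongr
        exact abs_norm_sub_norm_le _ _
    _ ≤ 2 * ‖φ - ψ‖ := by
        rw [Finset.sum_add_distrib]
        linarith [cs φ hφ, cs ψ hψ]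

variable {dA dB k : ℕ}

/-- Apply `U` to each column. -/
def comb (U : EuclideanSpace ℂ (Fin k) →L[ℂ] EuclideanSpace ℂ (Fin dA))
    (X : PiLp 2 (fun _ : Fin dB => EuclideanSpace ℂ (Fin k))) :
    EuclideanSpace ℂ (Fin dA × Fin dB) :=
  WithLp.toLp 2 (fun p => U (X p.2) p.1)

lemma comb_norm_sq (U : EuclideanSpace ℂ (Fin k) →L[ℂ] EuclideanSpace ℂ (Fin dA))
    (X : PiLp 2 (fun _ : Fin dB => EuclideanSpace ℂ (Fin k))) :
    ‖comb U X‖ ^ 2 = ∑ b, ‖U (X b)‖ ^ 2 := by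
  simp only [EuclideanSpace.norm_sq_eq, comb, Fintype.sum_prod_type]
  exact Finset.sum_comm

lemma comb_norm_le (U : EuclideanSpace ℂ (Fin k) →L[ℂ] EuclideanSpace ℂ (Fin dA))
    (X : PiLp 2 (fun _ : Fin dB => EuclideanSpace ℂ (Fin k))) :
    ‖comb U X‖ ≤ ‖U‖ * ‖X‖ := by
  refine (sq_le_sq₀ (norm_nonneg _) (by positivity)).1 ?_
  rw [comb_norm_sq, mul_pow, PiLp.norm_sq_eq_of_L2, Finset.mul_sum]
  refine Finset.sum_le_sum fun b _ => ?_
  rw [← mul_pow]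
  gcongr
  exact U.le_opNorm _

lemma comb_norm_eq (U : EuclideanSpace ℂ (Fin k) →L[ℂ] EuclideanSpace ℂ (Fin dA))
    (hU : ∀ x, ‖U x‖ = ‖x‖)
    (X : PiLp 2 (fun _ : Fin dB => EuclideanSpace ℂ (Fin k))) :
    ‖comb U X‖ = ‖X‖ := by
  have : ‖comb U X‖ ^ 2 = ‖X‖ ^ 2 := by
    rw [comb_norm_sq, PiLp.norm_sq_eq_of_L2]
    simp [hU]
  exact (sq_eq_sq₀ (norm_nonneg _) (norm_nonneg _)).1 this

lemma comb_sub (U V : EuclideanSpace ℂ (Fin k) →L[ℂ] EuclideanSpace ℂ (Fin dA))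
    (X Y : PiLp 2 (fun _ : Fin dB => EuclideanSpace ℂ (Fin k))) :
    comb U X - comb V Y = comb (U - V) X + comb V (X - Y) := by
  ext p
  simp [comb]

/-- Column of a bipartite vector. -/
def col (v : EuclideanSpace ℂ (Fin dA × Fin dB)) (b : Fin dB) : EuclideanSpace ℂ (Fin dA) :=
  WithLp.toLp 2 (fun a => v (a, b))

lemma rank_eq (v : EuclideanSpace ℂ (Fin dA × Fin dB)) :
    (QIT.ptraceB (QIT.pureDM v)).rank
      = Module.finrank ℂ (Submodule.span ℂ (Set.range (col v))) := by
  set M : Matrix (Fin dA) (Fin dB) ℂ := Matrix.of fun a b => v (a, b) with hM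
  have h1 : QIT.ptraceB (QIT.pureDM v) = M * Mᴴ := by
    ext a a'
    simp [QIT.ptraceB, QIT.pureDM, hM, Matrix.mul_apply]
  rw [h1, Matrix.rank_self_mul_conjTranspose, Matrix.rank_eq_finrank_span_cols]
  have h2 : Set.range M.col = (WithLp.linearEquiv 2 ℂ (Fin dA → ℂ)) '' (Set.range (col v)) := by
    rw [← Set.range_comp]
    rfl
  rw [h2]
  have h3 := Submodule.map_span (WithLp.linearEquiv 2 ℂ (Fin dA → ℂ)).toLinearMap
    (Set.range (col v))
  have h4 := LinearEquiv.finrank_map_eq (WithLp.linearEquiv 2 ℂ (Fin dA → ℂ))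
    (Submodule.span ℂ (Set.range (col v)))
  rw [← h4]
  exact congrArg (fun W : Submodule ℂ (Fin dA → ℂ) => Module.finrank ℂ W) h3.symm

lemma comb_rank (U : EuclideanSpace ℂ (Fin k) →L[ℂ] EuclideanSpace ℂ (Fin dA))
    (X : PiLp 2 (fun _ : Fin dB => EuclideanSpace ℂ (Fin k))) :
    (QIT.ptraceB (QIT.pureDM (comb U X))).rank ≤ k := by
  rw [rank_eq]
  have h : Submodule.span ℂ (Set.range (col (comb U X))) ≤ LinearMap.range U.toLinearMap := by
    rw [Submodule.span_le]
    rintro _ ⟨b, rfl⟩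
    exact ⟨X b, rfl⟩
  refine (Submodule.finrank_mono h).trans ((LinearMap.finrank_range_le _).trans ?_)
  simp

lemma exists_isometry (hk : k ≤ dA) (W : Submodule ℂ (EuclideanSpace ℂ (Fin dA)))
    (hW : Module.finrank ℂ W ≤ k) :
    ∃ U : EuclideanSpace ℂ (Fin k) →ₗᵢ[ℂ] EuclideanSpace ℂ (Fin dA),
      W ≤ LinearMap.range U.toLinearMap := by
  classical
  set r := Module.finrank ℂ W with hr
  let w := stdOrthonormalBasis ℂ W
  let v : Fin dA → EuclideanSpace ℂ (Fin dA) := fun i =>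
    if h : i.1 < r then (w ⟨i.1, h⟩ : EuclideanSpace ℂ (Fin dA)) else 0
  let s : Set (Fin dA) := {i | i.1 < r}
  have hv : Orthonormal ℂ (s.domRestrict v) := by
    have h0 : Orthonormal ℂ (fun i => (w i : EuclideanSpace ℂ (Fin dA))) :=
      w.orthonormal.comp_linearIsometry W.subtypeₗᵢ
    have h1 := h0.comp (fun i : s => (⟨i.1.1, i.2⟩ : Fin r)) (by
      intro i j hij
      simp only [Fin.mk.injEq] at hij
      exact Subtype.ext (Fin.ext hij))
    have h2 : s.domRestrict v = ((fun i => (w i : EuclideanSpace ℂ (Fin dA))) ∘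
        (fun i : s => (⟨i.1.1, i.2⟩ : Fin r))) := by
      funext i
      exact dif_pos i.2
    rw [h2]
    exact h1
  obtain ⟨b, hb⟩ := Orthonormal.exists_orthonormalBasis_extension_of_card_eq
    (by simp) hv
  let L : EuclideanSpace ℂ (Fin k) →ₗ[ℂ] EuclideanSpace ℂ (Fin dA) :=
    (EuclideanSpace.basisFun (Fin k) ℂ).toBasis.constr ℂ (fun i => b (Fin.castLE hk i))
  have hL : ∀ i, L ((EuclideanSpace.basisFun (Fin k) ℂ).toBasis i) = b (Fin.castLE hk i) :=
    fun i => Module.Basis.constr_basis _ _ _ i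
  have hLo : Orthonormal ℂ (L ∘ (EuclideanSpace.basisFun (Fin k) ℂ).toBasis) := by
    have := b.orthonormal.comp (Fin.castLE hk) (Fin.castLE_injective hk)
    have h2 : (L ∘ (EuclideanSpace.basisFun (Fin k) ℂ).toBasis) = b ∘ Fin.castLE hk :=
      funext hL
    rw [h2]
    exact this
  refine ⟨L.isometryOfOrthonormal (v := (EuclideanSpace.basisFun (Fin k) ℂ).toBasis)
    (by rw [OrthonormalBasis.coe_toBasis]; exact (EuclideanSpace.basisFun (Fin k) ℂ).orthonormal)
    hLo, ?_⟩
  intro x hx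
  have hx' := w.sum_repr ⟨x, hx⟩
  have hx2 : x = ∑ i, w.repr ⟨x, hx⟩ i • (w i : EuclideanSpace ℂ (Fin dA)) := by
    have := congrArg (W.subtype) hx'
    simpa using this.symm
  rw [hx2]
  refine Submodule.sum_mem _ fun i _ => Submodule.smul_mem _ _ ?_
  have hik : i.1 < k := lt_of_lt_of_le i.2 hW
  refine ⟨(EuclideanSpace.basisFun (Fin k) ℂ).toBasis ⟨i.1, hik⟩, ?_⟩
  have h5 := hb (Fin.castLE hk ⟨i.1, hik⟩) (show i.1 < r from i.2)
  have h6 : v (Fin.castLE hk ⟨i.1, hik⟩) = (w i : EuclideanSpace ℂ (Fin dA)) := by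
    have : i.1 < r := i.2
    simp [v, this]
  exact (hL ⟨i.1, hik⟩).trans (h5.trans h6)

lemma exists_comb (hk : k ≤ dA) (φ : EuclideanSpace ℂ (Fin dA × Fin dB))
    (hφ : (QIT.ptraceB (QIT.pureDM φ)).rank ≤ k) :
    ∃ (U : EuclideanSpace ℂ (Fin k) →L[ℂ] EuclideanSpace ℂ (Fin dA))
      (X : PiLp 2 (fun _ : Fin dB => EuclideanSpace ℂ (Fin k))),
      (∀ x, ‖U x‖ = ‖x‖) ∧ comb U X = φ := by
  rw [rank_eq] at hφ
  obtain ⟨U, hU⟩ := exists_isometry hk _ hφ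
  have : ∀ b, ∃ x, U x = col φ b := fun b => hU (Submodule.subset_span ⟨b, rfl⟩)
  choose X hX using this
  refine ⟨U.toContinuousLinearMap, WithLp.toLp 2 X, fun x => U.norm_map x, ?_⟩
  ext ⟨a, b⟩
  have := congrArg (fun y : EuclideanSpace ℂ (Fin dA) => y a) (hX b)
  simpa [comb, col] using this

lemma main (hk : k ≤ dA) (ε : ℝ) (hε0 : 0 < ε) (hε1 : ε < 1) :
    ∃ N : Finset (EuclideanSpace ℂ (Fin dA × Fin dB)),
      (N.card : ℝ) ≤ (10 / ε) ^ (2 * k * (dA + dB)) ∧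
      (∀ v ∈ N, ‖v‖ = 1 ∧ (QIT.ptraceB (QIT.pureDM v)).rank ≤ k) ∧
      ∀ φ : EuclideanSpace ℂ (Fin dA × Fin dB), ‖φ‖ = 1 →
        (QIT.ptraceB (QIT.pureDM φ)).rank ≤ k →
        ∃ ψ ∈ N, QIT.traceNorm (QIT.pureDM φ - QIT.pureDM ψ) ≤ ε := by
  classical
  have hδ : 0 < ε / 4 := by positivity
  obtain ⟨N₁, h1S, h1c, h1n⟩ := exists_net
    (E := EuclideanSpace ℂ (Fin k) →L[ℂ] EuclideanSpace ℂ (Fin dA)) (ε / 4) hδ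
    {U | ∀ x, ‖U x‖ = ‖x‖}
    (fun U hU => U.opNorm_le_bound zero_le_one (fun x => by rw [one_mul]; exact (hU x).le))
  obtain ⟨N₂, h2S, h2c, h2n⟩ := exists_net
    (E := PiLp 2 (fun _ : Fin dB => EuclideanSpace ℂ (Fin k))) (ε / 4) hδ
    {X | ‖X‖ = 1} (fun X hX => le_of_eq hX)
  have d1 : Module.finrank ℝ (EuclideanSpace ℂ (Fin k) →L[ℂ] EuclideanSpace ℂ (Fin dA))
      = 2 * (k * dA) := by
    rw [finrank_real_of_complex, ← LinearEquiv.finrank_eq (LinearMap.toContinuousLinearMap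
      (𝕜 := ℂ) (E := EuclideanSpace ℂ (Fin k)) (F' := EuclideanSpace ℂ (Fin dA))),
      Module.finrank_linearMap]
    simp
  have d2 : Module.finrank ℝ (PiLp 2 (fun _ : Fin dB => EuclideanSpace ℂ (Fin k)))
      = 2 * (k * dB) := by
    rw [finrank_real_of_complex, LinearEquiv.finrank_eq (WithLp.linearEquiv 2 ℂ
      (Fin dB → EuclideanSpace ℂ (Fin k))), Module.finrank_pi_fintype]
    simp [mul_comm]
  have hb : 1 + 2 / (ε / 4) ≤ 10 / ε := by
    have : 1 + 2 / (ε / 4) = (ε + 8) / ε := by field_simp; ring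
    rw [this]
    gcongr
    linarith
  refine ⟨(N₁ ×ˢ N₂).image (fun p => comb p.1 p.2), ?_, ?_, ?_⟩
  · have hc : (((N₁ ×ˢ N₂).image (fun p => comb p.1 p.2)).card : ℝ) ≤ N₁.card * N₂.card := by
      have := Finset.card_image_le (s := N₁ ×ˢ N₂) (f := fun p => comb p.1 p.2)
      rw [Finset.card_product] at this
      exact_mod_cast this
    have h0 : 0 ≤ 1 + 2 / (ε / 4) := by positivity
    calc _ ≤ (N₁.card : ℝ) * N₂.card := hc
      _ ≤ (1 + 2 / (ε / 4)) ^ (2 * (k * dA)) * (1 + 2 / (ε / 4)) ^ (2 * (k * dB)) := by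
        rw [d1] at h1c
        rw [d2] at h2c
        gcongr
      _ = (1 + 2 / (ε / 4)) ^ (2 * k * (dA + dB)) := by
        rw [← pow_add]; congr 1; ring
      _ ≤ _ := by gcongr
  · intro v hv
    obtain ⟨⟨U, X⟩, hp, rfl⟩ := Finset.mem_image.1 hv
    obtain ⟨hU, hX⟩ := Finset.mem_product.1 hp
    exact ⟨(comb_norm_eq U (h1S U hU) X).trans (h2S X hX), comb_rank U X⟩
  · intro φ hφ hr
    obtain ⟨U, X, hU, rfl⟩ := exists_comb hk φ hr
    have hX : ‖X‖ = 1 := by rw [← comb_norm_eq U hU X]; exact hφ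
    obtain ⟨V, hV, hUV⟩ := h1n U hU
    obtain ⟨Y, hY, hXY⟩ := h2n X hX
    refine ⟨comb V Y, Finset.mem_image.2 ⟨(V, Y), Finset.mem_product.2 ⟨hV, hY⟩, rfl⟩, ?_⟩
    have hn : ‖comb V Y‖ = 1 := (comb_norm_eq V (h1S V hV) Y).trans (h2S Y hY)
    refine (traceNorm_le _ _ hφ hn).trans ?_
    have e1 : ‖comb (U - V) X‖ ≤ ε / 4 := by
      refine (comb_norm_le _ _).trans ?_
      rw [hX, mul_one]; exact hUV
    have e2 : ‖comb V (X - Y)‖ ≤ ε / 4 := by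
      rw [comb_norm_eq V (h1S V hV)]; exact hXY
    have e3 := norm_add_le (comb (U - V) X) (comb V (X - Y))
    rw [← comb_sub] at e3
    linarith

end SchmidtNet

theorem exists_schmidt_rank_net (dA dB k : ℕ) (ε : ℝ) (hε0 : 0 < ε) (hε1 : ε < 1) :
    ∃ N : Finset (EuclideanSpace ℂ (Fin dA × Fin dB)),
      (N.card : ℝ) ≤ (10 / ε) ^ (2 * k * (dA + dB)) ∧
      (∀ v ∈ N, ‖v‖ = 1 ∧ (QIT.ptraceB (QIT.pureDM v)).rank ≤ k) ∧
      ∀ φ : EuclideanSpace ℂ (Fin dA × Fin dB), ‖φ‖ = 1 →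
        (QIT.ptraceB (QIT.pureDM φ)).rank ≤ k →
        ∃ ψ ∈ N, QIT.traceNorm (QIT.pureDM φ - QIT.pureDM ψ) ≤ ε := by
  rcases le_total k dA with hk | hk
  · exact SchmidtNet.main hk ε hε0 hε1
  · obtain ⟨N, h1, h2, h3⟩ := SchmidtNet.main (dA := dA) (dB := dB) le_rfl ε hε0 hε1
    refine ⟨N, h1.trans ?_, fun v hv => ⟨(h2 v hv).1, (h2 v hv).2.trans hk⟩, fun φ hφ _ =>
      h3 φ hφ ((Matrix.rank_le_card_height _).trans (by simp))⟩
    have : 1 ≤ 10 / ε := by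
      rw [le_div_iff₀ hε0]; linarith
    gcongr

end
end

section
/- Let φ be a pure state on A ⊗ B with d_A ≤ d_B whose entanglement entropy satisfies S(φ_A) ≥ log₂ d_A − c for c > 0. Then there exists a maximally entangled pure state Φ on A ⊗ B with fidelity F(φ, Φ) ≥ 1 − √(2c) and trace distance ‖φ − Φ‖₁ ≤ (16c)^{1/4}. -/
open scoped BigOperators ComplexOrder
open Matrix

noncomputable section

namespace QIT

lemma pureDM_eq {n : Type*} (φ : EuclideanSpace ℂ n) :
    pureDM φ = vecMulVec φ.ofLp (star φ.ofLp) := by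
  ext i j; simp [pureDM, vecMulVec]

lemma pureDM_herm {n : Type*} (φ : EuclideanSpace ℂ n) : (pureDM φ).IsHermitian := by
  ext i j; simp [pureDM, mul_comm]

lemma herm_spec {n : Type*} [Fintype n] [DecidableEq n] {M : Matrix n n ℂ}
    (h : M.IsHermitian) : M = (h.eigenvectorUnitary : Matrix n n ℂ) *
      Matrix.diagonal (fun i => (h.eigenvalues i : ℂ)) * (h.eigenvectorUnitary : Matrix n n ℂ)ᴴ := by
  have := h.spectral_theorem
  rw [Unitary.conjStarAlgAut_apply] at this
  exact this

lemma UhU {n : Type*} [Fintype n] [DecidableEq n] {M : Matrix n n ℂ}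
    (h : M.IsHermitian) : (h.eigenvectorUnitary : Matrix n n ℂ)ᴴ * (h.eigenvectorUnitary : Matrix n n ℂ) = 1 :=
  Unitary.coe_star_mul_self h.eigenvectorUnitary

lemma UUh {n : Type*} [Fintype n] [DecidableEq n] {M : Matrix n n ℂ}
    (h : M.IsHermitian) : (h.eigenvectorUnitary : Matrix n n ℂ) * (h.eigenvectorUnitary : Matrix n n ℂ)ᴴ = 1 :=
  Unitary.coe_mul_star_self h.eigenvectorUnitary

lemma herm_diag {n : Type*} [Fintype n] [DecidableEq n] {M : Matrix n n ℂ}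
    (h : M.IsHermitian) : (h.eigenvectorUnitary : Matrix n n ℂ)ᴴ * M * (h.eigenvectorUnitary : Matrix n n ℂ)
      = Matrix.diagonal (fun i => (h.eigenvalues i : ℂ)) := by
  set U := (h.eigenvectorUnitary : Matrix n n ℂ) with hU
  have h1 : Uᴴ * U = 1 := UhU h
  have h2 : M = U * Matrix.diagonal (fun i => (h.eigenvalues i : ℂ)) * Uᴴ := herm_spec h
  calc Uᴴ * M * U = Uᴴ * (U * Matrix.diagonal (fun i => (h.eigenvalues i : ℂ)) * Uᴴ) * U := by rw [← h2]
    _ = (Uᴴ * U) * Matrix.diagonal (fun i => (h.eigenvalues i : ℂ)) * (Uᴴ * U) := by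
        simp only [Matrix.mul_assoc]
    _ = _ := by rw [h1]; simp

lemma eig_sq {n : Type*} [Fintype n] [DecidableEq n] {M : Matrix n n ℂ}
    (h : M.IsHermitian) : (h.eigenvectorUnitary : Matrix n n ℂ)ᴴ * (M * M) * (h.eigenvectorUnitary : Matrix n n ℂ)
      = Matrix.diagonal (fun i => ((h.eigenvalues i ^ 2 : ℝ) : ℂ)) := by
  have h1 := UUh h
  have h2 := herm_diag h
  set U := (h.eigenvectorUnitary : Matrix n n ℂ) with hU
  calc Uᴴ * (M * M) * U = Uᴴ * (M * 1 * M) * U := by simp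
    _ = (Uᴴ * M * U) * (Uᴴ * M * U) := by rw [← h1]; simp only [Matrix.mul_assoc]
    _ = _ := by rw [h2, Matrix.diagonal_mul_diagonal]; congr 1; ext i; push_cast; ring

lemma trace_sq {n : Type*} [Fintype n] [DecidableEq n] {M : Matrix n n ℂ}
    (h : M.IsHermitian) : (M * M).trace = ((∑ i, h.eigenvalues i ^ 2 : ℝ) : ℂ) := by
  have h1 := UUh h
  have h2 := eig_sq h
  have h3 := congrArg Matrix.trace h2
  rw [Matrix.trace_mul_comm, ← Matrix.mul_assoc, h1, Matrix.one_mul, Matrix.trace_diagonal] at h3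
  rw [h3]; push_cast; rfl

lemma msqrt_of_sq {n : Type*} [Fintype n] [DecidableEq n] {M : Matrix n n ℂ}
    (h : M.IsHermitian) (t : ℝ) (ht : 0 ≤ t) (hM : M * M = (t : ℂ) • M) :
    msqrt M = (((Real.sqrt t)⁻¹ : ℝ) : ℂ) • M := by
  have hl : ∀ i, h.eigenvalues i ^ 2 = t * h.eigenvalues i := by
    intro i
    have h2 := eig_sq h
    rw [hM, Matrix.mul_smul, Matrix.smul_mul, herm_diag h] at h2
    have := congrFun (congrFun h2 i) i
    simp only [Matrix.smul_apply, Matrix.diagonal_apply_eq, smul_eq_mul] at this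
    exact_mod_cast this.symm
  have hs : ∀ i, Real.sqrt (h.eigenvalues i) = (Real.sqrt t)⁻¹ * h.eigenvalues i := by
    intro i
    have := hl i
    by_cases h0 : h.eigenvalues i = 0
    · simp [h0]
    · have h1 : h.eigenvalues i = t := by
        apply mul_right_cancel₀ h0; rw [← this]; ring
      rw [h1]
      rw [inv_mul_eq_div, Real.div_sqrt]
  rw [msqrt, hermApply, dif_pos h]
  conv_rhs => rw [herm_spec h]
  rw [← Matrix.smul_mul, ← Matrix.mul_smul, ← Matrix.diagonal_smul]
  congr 3
  ext i
  rw [hs i]; simp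

lemma dot_swap {n : Type*} [Fintype n] (u v : n → ℂ) (z : ℝ)
    (hz : star u ⬝ᵥ v = (z : ℂ)) : star v ⬝ᵥ u = (z : ℂ) := by
  have h2 := congrArg (starRingEnd ℂ) hz
  rw [Complex.conj_ofReal] at h2
  rw [← h2]
  simp [dotProduct, mul_comm]

lemma fidelity_pure {n : Type*} [Fintype n] [DecidableEq n] (φ ψ : EuclideanSpace ℂ n)
    (hφ : star φ.ofLp ⬝ᵥ φ.ofLp = 1) (z : ℝ) 
    (hz : star φ.ofLp ⬝ᵥ ψ.ofLp = (z : ℂ)) :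
    fidelity (pureDM φ) (pureDM ψ) = z ^ 2 := by
  have hz' : star ψ.ofLp ⬝ᵥ φ.ofLp = (z : ℂ) := dot_swap _ _ z hz
  have hP : pureDM φ * pureDM φ = ((1 : ℝ) : ℂ) • pureDM φ := by
    rw [pureDM_eq, Matrix.vecMulVec_mul_vecMulVec, hφ]; simp
  have hs := msqrt_of_sq (pureDM_herm φ) 1 zero_le_one hP
  have hs' : msqrt (pureDM φ) = pureDM φ := by rw [hs]; simp
  have hPQP : pureDM φ * pureDM ψ * pureDM φ = ((z ^ 2 : ℝ) : ℂ) • pureDM φ := by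
    simp only [pureDM_eq, Matrix.vecMulVec_mul_vecMulVec, Matrix.smul_mul, Matrix.vecMulVec_smul,
      Matrix.smul_vecMulVec, hz, hz', smul_smul]
    push_cast; ring_nf
  have hh : (((z ^ 2 : ℝ) : ℂ) • pureDM φ).IsHermitian := by
    have := pureDM_herm φ
    unfold Matrix.IsHermitian at *
    rw [Matrix.conjTranspose_smul, this]; simp
  have h2 := msqrt_of_sq hh (z ^ 2) (sq_nonneg z) (by
    rw [Matrix.smul_mul, Matrix.mul_smul, hP]; simp)
  have htr : (pureDM φ).trace = 1 := by
    rw [pureDM_eq, Matrix.trace_vecMulVec, dotProduct_comm, hφ]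
  rw [fidelity, hs', hPQP, h2, Matrix.trace_smul, Matrix.trace_smul, htr]
  simp only [smul_eq_mul, mul_one, ← Complex.ofReal_mul, Complex.ofReal_re]
  rw [Real.sqrt_sq_eq_abs, mul_pow, inv_pow, sq_abs]
  by_cases h0 : z = 0
  · simp [h0]
  · field_simp

lemma rank_add_le_aux {n : Type*} [Fintype n] [DecidableEq n] (A B : Matrix n n ℂ) :
    (A + B).rank ≤ A.rank + B.rank := by
  unfold Matrix.rank
  rw [Matrix.mulVecLin_add]
  refine (Submodule.finrank_mono (LinearMap.range_add_le _ _)).trans ?_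
  exact Submodule.finrank_add_le_finrank_add_finrank _ _

lemma traceNorm_pure {n : Type*} [Fintype n] [DecidableEq n] (φ ψ : EuclideanSpace ℂ n)
    (hφ : star φ.ofLp ⬝ᵥ φ.ofLp = 1) (hψ : star ψ.ofLp ⬝ᵥ ψ.ofLp = 1) (z : ℝ) 
    (hz : star φ.ofLp ⬝ᵥ ψ.ofLp = (z : ℂ)) :
    traceNorm (pureDM φ - pureDM ψ) ^ 2 ≤ 4 * (1 - z ^ 2) := by
  have hz' : star ψ.ofLp ⬝ᵥ φ.ofLp = (z : ℂ) := dot_swap _ _ z hz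
  have h : (pureDM φ - pureDM ψ).IsHermitian := (pureDM_herm φ).sub (pureDM_herm ψ)
  rw [traceNorm, dif_pos h]
  have htr := trace_sq h
  have htr2 : ((pureDM φ - pureDM ψ) * (pureDM φ - pureDM ψ)).trace = ((2 - 2 * z ^ 2 : ℝ) : ℂ) := by
    simp only [Matrix.sub_mul, Matrix.mul_sub, pureDM_eq, Matrix.vecMulVec_mul_vecMulVec,
      hφ, hψ, hz, hz', Matrix.trace_sub, Matrix.trace_vecMulVec, Matrix.vecMulVec_smul,
      Matrix.trace_smul]
    rw [dotProduct_comm φ.ofLp, dotProduct_comm φ.ofLp, dotProduct_comm ψ.ofLp,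
      dotProduct_comm ψ.ofLp]
    simp only [hφ, hψ, hz, hz', smul_eq_mul]
    push_cast; ring
  rw [htr2] at htr
  have hsum : 2 - 2 * z ^ 2 = ∑ i, h.eigenvalues i ^ 2 := by exact_mod_cast htr
  have hrank : (pureDM φ - pureDM ψ).rank ≤ 2 := by
    have e : pureDM φ - pureDM ψ = vecMulVec φ.ofLp (star φ.ofLp) + vecMulVec (-ψ.ofLp) (star ψ.ofLp) := by
      rw [pureDM_eq, pureDM_eq, Matrix.neg_vecMulVec, sub_eq_add_neg]
    rw [e]
    refine (rank_add_le_aux _ _).trans ?_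
    have := Matrix.rank_vecMulVec_le φ.ofLp (star φ.ofLp)
    have := Matrix.rank_vecMulVec_le (-ψ.ofLp) (star ψ.ofLp)
    omega
  rw [h.rank_eq_card_non_zero_eigs, Fintype.card_subtype] at hrank
  set s := Finset.univ.filter (fun i => h.eigenvalues i ≠ 0)
  have e1 : ∑ i, |h.eigenvalues i| = ∑ i ∈ s, |h.eigenvalues i| := by
    symm; apply Finset.sum_subset (Finset.subset_univ _)
    intro i _ hi; simpa [s] using hi
  have e2 : ∑ i ∈ s, |h.eigenvalues i| ^ 2 = ∑ i, h.eigenvalues i ^ 2 := by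
    simp only [sq_abs]
    apply Finset.sum_subset (Finset.subset_univ _)
    intro i _ hi; simpa [s] using hi
  rw [e1]
  have := sq_sum_le_card_mul_sum_sq (s := s) (f := fun i => |h.eigenvalues i|)
  rw [e2, ← hsum] at this
  have h0 : 0 ≤ 2 - 2 * z ^ 2 := by rw [hsum]; positivity
  have hc : (s.card : ℝ) ≤ 2 := by exact_mod_cast hrank
  nlinarith

lemma svd {dA dB : ℕ} (hAB : dA ≤ dB) (X : Matrix (Fin dA) (Fin dB) ℂ) (h : (X * Xᴴ).IsHermitian)
    (hp : ∀ i, 0 ≤ h.eigenvalues i) :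
    ∃ V : Matrix (Fin dB) (Fin dA) ℂ, Vᴴ * V = 1 ∧
      Xᴴ * (h.eigenvectorUnitary : Matrix (Fin dA) (Fin dA) ℂ) =
        V * Matrix.diagonal (fun i => ((Real.sqrt (h.eigenvalues i) : ℝ) : ℂ)) := by
  set U := (h.eigenvectorUnitary : Matrix (Fin dA) (Fin dA) ℂ) with hU
  set p := h.eigenvalues with hpd
  set W := Xᴴ * U with hW
  have hWW : Wᴴ * W = Matrix.diagonal (fun i => (p i : ℂ)) := by
    rw [← herm_diag h, hW, Matrix.conjTranspose_mul, Matrix.conjTranspose_conjTranspose]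
    simp only [Matrix.mul_assoc, ← hU]
  have hW' : ∀ i j, ∑ k, star (W k i) * W k j = if i = j then (p i : ℂ) else 0 := by
    intro i j
    have := congrFun (congrFun hWW i) j
    simpa [Matrix.mul_apply, Matrix.diagonal_apply] using this
  let v : Fin dA ⊕ Fin (dB - dA) → EuclideanSpace ℂ (Fin dB) :=
    Sum.elim (fun i => WithLp.toLp 2 (fun k => (((Real.sqrt (p i))⁻¹ : ℝ) : ℂ) * W k i)) (fun _ => 0)
  let s : Set (Fin dA ⊕ Fin (dB - dA)) := Sum.inl '' {i | p i ≠ 0}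
  have hv : Orthonormal ℂ (s.domRestrict v) := by
    rw [orthonormal_iff_ite]
    rintro ⟨x, hx⟩ ⟨y, hy⟩
    have hx' := hx
    have hy' := hy
    obtain ⟨i, hi, rfl⟩ := hx'
    obtain ⟨j, hj, rfl⟩ := hy'
    have e : inner ℂ (v (Sum.inl i)) (v (Sum.inl j)) = 
        (((Real.sqrt (p i))⁻¹ : ℝ) : ℂ) * (((Real.sqrt (p j))⁻¹ : ℝ) : ℂ) * ∑ k, star (W k i) * W k j := by
      simp only [v, Sum.elim_inl, PiLp.inner_apply, Finset.mul_sum, RCLike.inner_apply]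
      apply Finset.sum_congr rfl
      intro k _
      simp only [map_mul, Complex.conj_ofReal, Complex.star_def]
      ring
    simp only [Subtype.mk.injEq, Sum.inl.injEq]
    refine e.trans ?_
    rw [hW']
    by_cases hij : i = j
    · subst hij
      simp only [if_true]
      have h1 : Real.sqrt (p i) ≠ 0 := by
        rw [Real.sqrt_ne_zero (hp i)]; exact hi
      have h2 := Real.mul_self_sqrt (hp i)
      rw [← Complex.ofReal_mul, ← Complex.ofReal_mul]
      norm_cast
      field_simp
      nlinarith
    · simp [hij]
  obtain ⟨b, hb⟩ := hv.exists_orthonormalBasis_extension_of_card_eq (by simp; omega)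
  refine ⟨Matrix.of fun k i => b (Sum.inl i) k, ?_, ?_⟩
  · ext i j
    have := orthonormal_iff_ite.mp b.orthonormal (Sum.inl i) (Sum.inl j)
    simp only [PiLp.inner_apply, RCLike.inner_apply, Sum.inl.injEq] at this
    simp only [Matrix.mul_apply, Matrix.conjTranspose_apply, Matrix.of_apply, Matrix.one_apply]
    rw [← this]
    apply Finset.sum_congr rfl
    intro k _
    rw [mul_comm]; rfl
  · ext k i
    rw [Matrix.mul_diagonal, Matrix.of_apply]
    by_cases h0 : p i = 0
    · have := hW' i i
      simp only [if_true, h0] at this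
      have h1 : ∑ k, ‖W k i‖ ^ 2 = 0 := by
        have e : ∀ k, star (W k i) * W k i = ((‖W k i‖ ^ 2 : ℝ) : ℂ) := by
          intro k
          have := Complex.conj_mul' (W k i)
          simpa using this
        simp only [e] at this
        exact_mod_cast this
      rw [Finset.sum_eq_zero_iff_of_nonneg (fun _ _ => by positivity)] at h1
      have := h1 k (Finset.mem_univ _)
      simp only [h0, Real.sqrt_zero, Complex.ofReal_zero, mul_zero]
      simpa using this
    · rw [hb (Sum.inl i) ⟨i, h0, rfl⟩]
      have h1 : Real.sqrt (p i) ≠ 0 := by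
        rw [Real.sqrt_ne_zero (hp i)]; exact h0
      have h1' : (Real.sqrt (p i) : ℂ) ≠ 0 := by exact_mod_cast h1
      simp only [v, Sum.elim_inl]
      push_cast
      field_simp

lemma entropy_bound {d : ℕ} (hd : 0 < d) (p : Fin d → ℝ) (hp : ∀ i, 0 ≤ p i) (h1 : ∑ i, p i = 1)
    (c : ℝ) (hc : 0 < c) (hS : Real.logb 2 d - c ≤ ∑ i, -(p i * Real.logb 2 (p i))) :
    1 - c ≤ (∑ i, Real.sqrt (p i)) ^ 2 / d := by
  set T := ∑ i, Real.sqrt (p i) with hT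
  have hT0 : 0 < T := by
    apply Finset.sum_pos'
    · intros; positivity
    · by_contra! hcon
      have : ∑ i, p i = 0 := Finset.sum_eq_zero (fun i _ => by
        have := hcon i (Finset.mem_univ _)
        rw [Real.sqrt_le_iff] at this
        have := hp i
        simp at *
        linarith)
      linarith
  have key : ∀ i, p i * (-(Real.log (p i)) / 2 - Real.log T) ≤ Real.sqrt (p i) / T - p i := by
    intro i
    rcases (hp i).eq_or_lt with h0 | h0
    · simp [← h0]
    · have hs : 0 < Real.sqrt (p i) := Real.sqrt_pos.mpr h0
      have := Real.log_le_sub_one_of_pos (x := (Real.sqrt (p i) * T)⁻¹) (by positivity)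
      rw [Real.log_inv, Real.log_mul hs.ne' hT0.ne', Real.log_sqrt h0.le] at this
      have h3 := mul_le_mul_of_nonneg_left this h0.le
      have h4 : p i * ((Real.sqrt (p i) * T)⁻¹ - 1) = Real.sqrt (p i) / T - p i := by
        have := Real.mul_self_sqrt h0.le
        field_simp
        nlinarith
      rw [h4] at h3
      refine le_trans (le_of_eq ?_) h3
      ring
  have hsum := Finset.sum_le_sum (fun i (_ : i ∈ Finset.univ) => key i)
  rw [Finset.sum_sub_distrib, h1, ← Finset.sum_div, ← hT, div_self hT0.ne', sub_self] at hsum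
  have e : ∑ i, p i * (-(Real.log (p i)) / 2 - Real.log T) = 
      (∑ i, -(p i * Real.log (p i))) / 2 - Real.log T := by
    calc _ = ∑ i, ((-(p i * Real.log (p i))) / 2 - p i * Real.log T) :=
          Finset.sum_congr rfl (fun i _ => by ring)
      _ = _ := by rw [Finset.sum_sub_distrib, ← Finset.sum_mul, h1, Finset.sum_div]; ring
  rw [e] at hsum
  have hl2 : 0 < Real.log 2 := Real.log_pos (by norm_num)
  have hl2' : Real.log 2 ≤ 1 := by have := Real.log_two_lt_d9; linarith
  have e2 : ∑ i, -(p i * Real.logb 2 (p i)) = (∑ i, -(p i * Real.log (p i))) / Real.log 2 := by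
    rw [Finset.sum_div]
    exact Finset.sum_congr rfl (fun i _ => by rw [Real.logb]; ring)
  rw [e2, Real.logb, le_div_iff₀ hl2, sub_mul, div_mul_cancel₀ _ hl2.ne'] at hS
  have hd' : (0 : ℝ) < d := by exact_mod_cast hd
  have := Real.log_le_sub_one_of_pos (x := T ^ 2 / d) (by positivity)
  rw [Real.log_div (by positivity) hd'.ne', Real.log_pow] at this
  push_cast at this
  nlinarith

end QIT

theorem close_to_maximally_entangled (dA dB : ℕ) (hA : 0 < dA) (hAB : dA ≤ dB)
    (φ : EuclideanSpace ℂ (Fin dA × Fin dB)) (hφ : ‖φ‖ = 1)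
    (c : ℝ) (hc : 0 < c)
    (hS : Real.logb 2 dA - c ≤ QIT.vNEntropy (QIT.ptraceB (QIT.pureDM φ))) :
    ∃ Φ : EuclideanSpace ℂ (Fin dA × Fin dB), ‖Φ‖ = 1 ∧
      QIT.ptraceB (QIT.pureDM Φ) = ((1 / (dA : ℝ) : ℝ) : ℂ) • 1 ∧
      1 - Real.sqrt (2 * c) ≤ QIT.fidelity (QIT.pureDM φ) (QIT.pureDM Φ) ∧
      QIT.traceNorm (QIT.pureDM φ - QIT.pureDM Φ) ≤ (16 * c) ^ ((1 : ℝ) / 4) := by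
  set X : Matrix (Fin dA) (Fin dB) ℂ := Matrix.of fun a b => φ (a, b) with hX
  have hρ : QIT.ptraceB (QIT.pureDM φ) = X * Xᴴ := by
    ext a a'
    simp [QIT.ptraceB, QIT.pureDM, hX, Matrix.mul_apply]
  have hpsd : (X * Xᴴ).PosSemidef := Matrix.posSemidef_self_mul_conjTranspose X
  have h : (X * Xᴴ).IsHermitian := hpsd.1
  have hp : ∀ i, 0 ≤ h.eigenvalues i := fun i => hpsd.eigenvalues_nonneg i
  have hφ1 : star φ.ofLp ⬝ᵥ φ.ofLp = 1 := by
    have h1 := inner_self_eq_norm_sq_to_K (𝕜 := ℂ) φ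
    rw [hφ, EuclideanSpace.inner_eq_star_dotProduct, dotProduct_comm] at h1
    simpa using h1
  have htr : (X * Xᴴ).trace = 1 := by
    rw [← hφ1]
    simp [Matrix.trace, Matrix.mul_apply, hX, dotProduct, Fintype.sum_prod_type, mul_comm]
  have hsum : ∑ i, h.eigenvalues i = 1 := by
    rw [h.trace_eq_sum_eigenvalues] at htr
    have h2 := congrArg Complex.re htr
    simpa using h2
  rw [hρ, QIT.vNEntropy, dif_pos h] at hS
  have hF := QIT.entropy_bound hA h.eigenvalues hp hsum c hc hS
  obtain ⟨V, hV, hXV⟩ := QIT.svd hAB X h hp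
  have hUU := QIT.UUh h
  have hUU' := QIT.UhU h
  set U := (h.eigenvectorUnitary : Matrix (Fin dA) (Fin dA) ℂ) with hU
  set T := ∑ i, Real.sqrt (h.eigenvalues i) with hT
  have hd : (0 : ℝ) < dA := by exact_mod_cast hA
  have hsd : 0 < Real.sqrt dA := Real.sqrt_pos.mpr hd
  set r : ℝ := (Real.sqrt dA)⁻¹ with hr
  have hr2 : r * r = 1 / dA := by
    rw [hr, ← mul_inv, Real.mul_self_sqrt hd.le, one_div]
  set Y : Matrix (Fin dA) (Fin dB) ℂ := (r : ℂ) • (U * Vᴴ) with hY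
  have hYY : Y * Yᴴ = ((1 / (dA : ℝ) : ℝ) : ℂ) • 1 := by
    rw [hY, Matrix.conjTranspose_smul, Matrix.smul_mul, Matrix.mul_smul, smul_smul,
      Matrix.conjTranspose_mul, Matrix.conjTranspose_conjTranspose]
    have : U * Vᴴ * (V * Uᴴ) = 1 := by
      rw [Matrix.mul_assoc, ← Matrix.mul_assoc Vᴴ, hV, Matrix.one_mul, hUU]
    rw [this, ← hr2]; simp
  have hov : (Y * Xᴴ).trace = ((r * T : ℝ) : ℂ) := by
    have e : Y * Xᴴ = (r : ℂ) • (U * (Vᴴ * (Xᴴ * U) * Uᴴ)) := by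
      have : Xᴴ = Xᴴ * U * Uᴴ := by rw [Matrix.mul_assoc, hUU, Matrix.mul_one]
      conv_lhs => rw [this]
      rw [hY, Matrix.smul_mul]; simp only [Matrix.mul_assoc]
    rw [e, hXV, ← Matrix.mul_assoc Vᴴ, hV, Matrix.one_mul, Matrix.trace_smul,
      Matrix.trace_mul_comm, Matrix.mul_assoc, hUU', Matrix.mul_one, Matrix.trace_diagonal, hT]
    push_cast; rfl
  let Φ : EuclideanSpace ℂ (Fin dA × Fin dB) := WithLp.toLp 2 (fun x => Y x.1 x.2)
  have hΦρ : QIT.ptraceB (QIT.pureDM Φ) = Y * Yᴴ := by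
    ext a a'
    simp [QIT.ptraceB, QIT.pureDM, Φ, Matrix.mul_apply]
  have hΦ1 : star Φ.ofLp ⬝ᵥ Φ.ofLp = 1 := by
    have : (Y * Yᴴ).trace = 1 := by
      rw [hYY, Matrix.trace_smul, Matrix.trace_one]
      simp [hA.ne']
    rw [← this]
    simp [Matrix.trace, Matrix.mul_apply, Φ, dotProduct, Fintype.sum_prod_type, mul_comm]
  have hz : star φ.ofLp ⬝ᵥ Φ.ofLp = ((r * T : ℝ) : ℂ) := by
    rw [← hov]
    simp [Matrix.trace, Matrix.mul_apply, Φ, hX, dotProduct, Fintype.sum_prod_type, mul_comm]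
  have hz2 : (r * T) ^ 2 = T ^ 2 / dA := by
    rw [mul_pow, sq r, hr2]; ring
  have hFs : 1 - Real.sqrt c ≤ (r * T) ^ 2 := by
    rw [hz2]
    rcases le_total c 1 with h1 | h1
    · have : c ≤ Real.sqrt c := Real.le_sqrt_of_sq_le (by nlinarith)
      linarith
    · have : 1 ≤ Real.sqrt c := Real.one_le_sqrt.mpr h1
      have : 0 ≤ T ^ 2 / dA := by positivity
      linarith
  refine ⟨Φ, ?_, ?_, ?_, ?_⟩
  · have h1 := inner_self_eq_norm_sq_to_K (𝕜 := ℂ) Φ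
    rw [EuclideanSpace.inner_eq_star_dotProduct, dotProduct_comm, hΦ1] at h1
    have h2 : ‖Φ‖ ^ 2 = 1 := by
      have h3 := congrArg Complex.re h1.symm
      rw [← RCLike.ofReal_pow] at h3
      simpa [← Complex.ofReal_pow] using h3
    exact (pow_eq_one_iff_of_nonneg (norm_nonneg Φ) two_ne_zero).mp h2
  · rw [hΦρ, hYY]
  · rw [QIT.fidelity_pure φ Φ hφ1 _ hz]
    have : Real.sqrt c ≤ Real.sqrt (2 * c) := Real.sqrt_le_sqrt (by linarith)
    linarith
  · have h1 := QIT.traceNorm_pure φ Φ hφ1 hΦ1 _ hz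
    have h2 : QIT.traceNorm (QIT.pureDM φ - QIT.pureDM Φ) ^ 2 ≤ 4 * Real.sqrt c := by linarith
    have h3 : (((16 * c) ^ ((1 : ℝ) / 4)) ^ 2 : ℝ) = 4 * Real.sqrt c := by
      rw [← Real.rpow_natCast, ← Real.rpow_mul (by positivity)]
      have : (1 : ℝ) / 4 * (2 : ℕ) = 1 / 2 := by norm_num
      rw [this, ← Real.sqrt_eq_rpow, Real.sqrt_mul (by norm_num)]
      congr 1
      rw [show (16 : ℝ) = 4 ^ 2 by norm_num, Real.sqrt_sq (by norm_num)]
    exact le_of_sq_le_sq (by rw [h3]; exact h2) (by positivity)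


end
end

section
/- Let σ be a density matrix on C² ⊗ C² (i.e., a two-qubit state). If ‖σ − I/4‖_∞ ≤ 1/8, then σ is separable. -/
open scoped BigOperators ComplexOrder
open Matrix

noncomputable section

namespace SepBall

open QIT

abbrev M2 := Matrix (Fin 2) (Fin 2) ℂ
abbrev M4 := Matrix (Fin 2 × Fin 2) (Fin 2 × Fin 2) ℂ

/-- The cone of unnormalised separable operators. -/
def cone : AddSubmonoid M4 :=
  AddSubmonoid.closure {ρ | ∃ a b : M2, a.PosSemidef ∧ b.PosSemidef ∧ ρ = kron a b}

lemma kron_mem {a b : M2} (ha : a.PosSemidef) (hb : b.PosSemidef) : kron a b ∈ cone :=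
  AddSubmonoid.subset_closure ⟨a, b, ha, hb, rfl⟩

lemma trace_kron (a b : M2) : (kron a b).trace = a.trace * b.trace := by
  simp [Matrix.trace, kron, Fintype.sum_prod_type, Fin.sum_univ_two]
  ring

lemma psd_norm {a : M2} (ha : a.PosSemidef) :
    ∃ (t : ℝ) (a' : M2), 0 ≤ t ∧ a'.PosSemidef ∧ a'.trace = 1 ∧ a = (t : ℂ) • a' := by
  have h0 := ha.trace_nonneg
  obtain ⟨t, ht⟩ : ∃ t : ℝ, a.trace = (t : ℂ) := by
    refine ⟨a.trace.re, ?_⟩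
    rw [Complex.le_def] at h0
    apply Complex.ext <;> simp [← h0.2]
  rw [ht] at h0
  have h1 : 0 ≤ t := by exact_mod_cast h0
  rcases h1.eq_or_lt with h2 | h2
  · refine ⟨0, ((1 / 2 : ℝ) : ℂ) • 1, le_rfl, ?_, ?_, ?_⟩
    · exact Matrix.PosSemidef.one.smul (by exact_mod_cast (by norm_num : (0 : ℝ) ≤ 1 / 2))
    · simp [Matrix.trace_smul]
    · have : a = 0 := by
        rw [← ha.trace_eq_zero_iff, ht, ← h2]; simp
      simp [this]
  · refine ⟨t, ((1 / t : ℝ) : ℂ) • a, h1, ?_, ?_, ?_⟩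
    · exact ha.smul (by exact_mod_cast (by positivity : (0 : ℝ) ≤ 1 / t))
    · rw [Matrix.trace_smul, ht, smul_eq_mul, ← Complex.ofReal_mul]
      field_simp
      simp
    · rw [smul_smul, ← Complex.ofReal_mul]
      field_simp
      simp

lemma cone_exists {ρ : M4} (h : ρ ∈ cone) :
    ∃ (m : ℕ) (p : Fin m → ℝ) (a : Fin m → M2) (b : Fin m → M2),
    (∀ l, 0 ≤ p l) ∧ (∀ l, (a l).PosSemidef ∧ (a l).trace = 1) ∧
    (∀ l, (b l).PosSemidef ∧ (b l).trace = 1) ∧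
    ρ = ∑ l, (p l : ℂ) • kron (a l) (b l) := by
  induction h using AddSubmonoid.closure_induction with
  | mem x hx =>
    obtain ⟨a, b, ha, hb, rfl⟩ := hx
    obtain ⟨t, a', ht, ha', hta, rfl⟩ := psd_norm ha
    obtain ⟨u, b', hu, hb', htb, rfl⟩ := psd_norm hb
    refine ⟨1, fun _ => t * u, fun _ => a', fun _ => b', fun _ => by positivity,
      fun _ => ⟨ha', hta⟩, fun _ => ⟨hb', htb⟩, ?_⟩
    ext x y
    simp [kron]
    ring
  | zero => exact ⟨0, Fin.elim0, Fin.elim0, Fin.elim0, fun l => l.elim0, fun l => l.elim0,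
      fun l => l.elim0, by simp⟩
  | add x y _ _ hx hy =>
    obtain ⟨m, p, a, b, h1, h2, h3, h4⟩ := hx
    obtain ⟨m', p', a', b', h1', h2', h3', h4'⟩ := hy
    refine ⟨m + m', Fin.append p p', Fin.append a a', Fin.append b b', ?_, ?_, ?_, ?_⟩
    · intro l; refine Fin.addCases (fun i => ?_) (fun i => ?_) l <;> simp [h1, h1']
    · intro l; refine Fin.addCases (fun i => ?_) (fun i => ?_) l <;> simp [h2, h2']
    · intro l; refine Fin.addCases (fun i => ?_) (fun i => ?_) l <;> simp [h3, h3']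
    · rw [Fin.sum_univ_add, h4, h4']; simp

lemma sep_of_cone {ρ : M4} (h : ρ ∈ cone) (ht : ρ.trace = 1) : Separable ρ := by
  obtain ⟨m, p, a, b, h1, h2, h3, h4⟩ := cone_exists h
  refine ⟨m, p, a, b, h1, ?_, h2, h3, h4⟩
  rw [h4, Matrix.trace_sum] at ht
  simp only [Matrix.trace_smul, trace_kron, (h2 _).2, (h3 _).2] at ht
  simp at ht
  exact_mod_cast ht

lemma psd_of_sq {M : M2} {k : ℝ} (hk : 0 < k) (hM : M.IsHermitian)
    (h : M * M = (k : ℂ) • M) : M.PosSemidef := by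
  have h1 : M = ((1 / k : ℝ) : ℂ) • (Mᴴ * M) := by
    rw [hM.eq, h, smul_smul, ← Complex.ofReal_mul]
    field_simp
    simp
  rw [h1]
  exact (Matrix.posSemidef_conjTranspose_mul_self M).smul
    (by exact_mod_cast (by positivity : (0 : ℝ) ≤ 1 / k))

lemma psd_A (s : ℝ) (hs : 0 ≤ s) (z : ℂ) (hz : z.re ^ 2 + z.im ^ 2 = s ^ 2) :
    (!![(s : ℂ), z; (starRingEnd ℂ) z, (s : ℂ)] : M2).PosSemidef := by
  rcases hs.eq_or_lt with h2 | h2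
  · have : z = 0 := by
      subst h2
      apply Complex.ext <;> simp <;> nlinarith [sq_nonneg z.re, sq_nonneg z.im]
    subst this; subst h2
    have : (!![((0 : ℝ) : ℂ), 0; (starRingEnd ℂ) 0, ((0 : ℝ) : ℂ)] : M2) = 0 := by
      ext i j; fin_cases i <;> fin_cases j <;> simp
    rw [this]; exact Matrix.PosSemidef.zero
  · apply psd_of_sq (k := 2 * s) (by positivity)
    · ext i j; fin_cases i <;> fin_cases j <;> simp
    · ext i j; fin_cases i <;> fin_cases j <;>
        simp [Matrix.mul_apply, Fin.sum_univ_two, Complex.ext_iff] <;>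
        first
        | (constructor <;> nlinarith)
        | nlinarith

/-- block operator. -/
def blk (s : ℝ) (X : M2) : M4 :=
  kron !![1, 0; 0, 1] ((s : ℂ) • 1) + kron !![0, 1; 0, 0] X + kron !![0, 0; 1, 0] Xᴴ

lemma kron_add (a b c : M2) : kron a (b + c) = kron a b + kron a c := by
  ext x y; simp [kron]; ring

lemma blk_add (s t : ℝ) (X Y : M2) : blk (s + t) (X + Y) = blk s X + blk t Y := by
  simp only [blk, Complex.ofReal_add, add_smul, Matrix.conjTranspose_add, kron_add]
  abel

def Q (a b c d : ℝ) : M2 :=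
  !![(⟨a, d⟩ : ℂ), ⟨-b, c⟩; ⟨b, c⟩, ⟨a, -d⟩]

lemma psd_N (h b c d : ℝ) (hh : 0 < h) (h2 : h ^ 2 = b ^ 2 + c ^ 2 + d ^ 2) :
    (!![(⟨h + d, 0⟩ : ℂ), ⟨c, b⟩; ⟨c, -b⟩, ⟨h - d, 0⟩] : M2).PosSemidef := by
  apply psd_of_sq (k := 2 * h) (by positivity)
  · ext i j; fin_cases i <;> fin_cases j <;> simp [Complex.ext_iff]
  · ext i j; fin_cases i <;> fin_cases j <;>
      simp [Matrix.mul_apply, Fin.sum_univ_two, Complex.ext_iff] <;>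
      first
      | (constructor <;> nlinarith)
      | nlinarith

lemma blk_Q_mem (s a b c d : ℝ) (hs : 0 ≤ s) (hs2 : s ^ 2 = a ^ 2 + b ^ 2 + c ^ 2 + d ^ 2)
    (e : ℂ) (he : e.re ^ 2 + e.im ^ 2 = 1) : blk s (e • Q a b c d) ∈ cone := by
  obtain ⟨h, hh, hh2⟩ : ∃ h : ℝ, 0 ≤ h ∧ h ^ 2 = b ^ 2 + c ^ 2 + d ^ 2 :=
    ⟨Real.sqrt (b ^ 2 + c ^ 2 + d ^ 2), Real.sqrt_nonneg _, Real.sq_sqrt (by positivity)⟩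
  rcases hh.eq_or_lt with h0 | h0
  · subst h0
    have hb : b = 0 := by nlinarith [sq_nonneg b, sq_nonneg c, sq_nonneg d]
    have hc : c = 0 := by nlinarith [sq_nonneg b, sq_nonneg c, sq_nonneg d]
    have hd : d = 0 := by nlinarith [sq_nonneg b, sq_nonneg c, sq_nonneg d]
    subst hb hc hd
    have key : blk s (e • Q a 0 0 0) =
        kron !![(s : ℂ), e * a; (starRingEnd ℂ) (e * a), (s : ℂ)] 1 := by
      ext ⟨i, j⟩ ⟨k, l⟩
      fin_cases i <;> fin_cases j <;> fin_cases k <;> fin_cases l <;>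
        simp [blk, kron, Q, Complex.ext_iff]
    rw [key]
    refine kron_mem (psd_A s hs _ ?_) Matrix.PosSemidef.one
    simp
    linear_combination a ^ 2 * he - hs2
  · have key : blk s (e • Q a b c d) =
        kron !![(s : ℂ), e * ⟨a, h⟩; (starRingEnd ℂ) (e * ⟨a, h⟩), (s : ℂ)]
          (((1 / (2 * h) : ℝ) : ℂ) • !![(⟨h + d, 0⟩ : ℂ), ⟨c, b⟩; ⟨c, -b⟩, ⟨h - d, 0⟩]) +
        kron !![(s : ℂ), e * ⟨a, -h⟩; (starRingEnd ℂ) (e * ⟨a, -h⟩), (s : ℂ)]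
          (((1 / (2 * h) : ℝ) : ℂ) •
            !![(⟨h + -d, 0⟩ : ℂ), ⟨-c, -b⟩; ⟨-c, -(-b)⟩, ⟨h - -d, 0⟩]) := by
      generalize hk : 1 / (2 * h) = k
      have hk' : k * h = 1 / 2 := by rw [← hk]; field_simp
      ext ⟨i, j⟩ ⟨k, l⟩
      fin_cases i <;> fin_cases j <;> fin_cases k <;> fin_cases l <;>
        simp [blk, kron, Q, Complex.ext_iff] <;> grind
    rw [key]
    have hp : (0 : ℂ) ≤ ((1 / (2 * h) : ℝ) : ℂ) := by
      exact_mod_cast (by positivity : (0 : ℝ) ≤ 1 / (2 * h))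
    refine add_mem (kron_mem (psd_A s hs _ ?_) ((psd_N h b c d h0 hh2).smul hp))
      (kron_mem (psd_A s hs _ ?_) ((psd_N h (-b) (-c) (-d) h0 (by rw [hh2]; ring)).smul hp))
    · simp
      linear_combination (a ^ 2 + h ^ 2) * he - hs2 + hh2
    · simp
      linear_combination (a ^ 2 + h ^ 2) * he - hs2 + hh2

lemma blk_one_mem (s : ℝ) (hs : 0 ≤ s) : blk s 0 ∈ cone := by
  have : blk s 0 = kron ((s : ℂ) • 1) 1 := by
    ext ⟨i, j⟩ ⟨k, l⟩
    fin_cases i <;> fin_cases j <;> fin_cases k <;> fin_cases l <;> simp [blk, kron]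
  rw [this]
  exact kron_mem (Matrix.PosSemidef.one.smul (by exact_mod_cast hs)) Matrix.PosSemidef.one

lemma exists_phase (z : ℂ) : ∃ c : ℂ, c.re ^ 2 + c.im ^ 2 = 1 ∧ (c ^ 2 * z).im = 0 := by
  refine ⟨Complex.exp ((-(z.arg / 2) : ℝ) * Complex.I), ?_, ?_⟩
  · rw [Complex.exp_ofReal_mul_I_re, Complex.exp_ofReal_mul_I_im]
    exact Real.cos_sq_add_sin_sq _
  · have hz := Complex.norm_mul_exp_arg_mul_I z
    generalize z.arg = θ at *
    rw [← hz, ← Complex.exp_nat_mul, mul_left_comm, ← Complex.exp_add]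
    have : (((2 : ℕ) : ℂ) * ((-(θ / 2) : ℝ) * Complex.I) + θ * Complex.I) = 0 := by
      push_cast; ring
    rw [this]; simp

lemma blk_contraction_mem (X : M2) (h : (1 - Xᴴ * X).PosSemidef) : blk 1 X ∈ cone := by
  obtain ⟨c, hc, hz⟩ := exists_phase X.det
  obtain ⟨a, b, p, d, a', b', p', d', hX⟩ : ∃ a b p d a' b' p' d' : ℝ,
      c • X = Q a b p d + Complex.I • Q a' b' p' d' := by
    generalize c • X = Y
    refine ⟨((Y 0 0).re + (Y 1 1).re) / 2, ((Y 1 0).re - (Y 0 1).re) / 2,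
      ((Y 1 0).im + (Y 0 1).im) / 2, ((Y 0 0).im - (Y 1 1).im) / 2,
      ((Y 0 0).im + (Y 1 1).im) / 2, ((Y 1 0).im - (Y 0 1).im) / 2,
      -((Y 1 0).re + (Y 0 1).re) / 2, -((Y 0 0).re - (Y 1 1).re) / 2, ?_⟩
    ext i j; fin_cases i <;> fin_cases j <;> simp [Q, Complex.ext_iff] <;> constructor <;> ring
  have hcc : (starRingEnd ℂ) c * c = 1 := by
    simp [Complex.ext_iff]; constructor <;> nlinarith
  have hX' : X = (starRingEnd ℂ) c • Q a b p d +
      ((starRingEnd ℂ) c * Complex.I) • Q a' b' p' d' := by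
    rw [mul_smul, ← smul_add, ← hX, smul_smul, hcc, one_smul]
  have hYY : Xᴴ * X = (c • X)ᴴ * (c • X) := by
    rw [Matrix.conjTranspose_smul, Matrix.smul_mul, Matrix.mul_smul, smul_smul]
    change _ = ((starRingEnd ℂ) c * c) • _
    rw [hcc, one_smul]
  have hdet : (c • X).det = c ^ 2 * X.det := by
    rw [Matrix.det_smul]; simp
  rw [← hdet, hX] at hz
  rw [hYY, hX] at h
  have horth : a * a' + b * b' + p * p' + d * d' = 0 := by
    simp [Matrix.det_fin_two, Q] at hz
    linarith
  obtain ⟨s, hs, hs2⟩ : ∃ h : ℝ, 0 ≤ h ∧ h ^ 2 = a ^ 2 + b ^ 2 + p ^ 2 + d ^ 2 :=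
    ⟨Real.sqrt _, Real.sqrt_nonneg _, Real.sq_sqrt (by positivity)⟩
  obtain ⟨t, ht, ht2⟩ : ∃ h : ℝ, 0 ≤ h ∧ h ^ 2 = a' ^ 2 + b' ^ 2 + p' ^ 2 + d' ^ 2 :=
    ⟨Real.sqrt _, Real.sqrt_nonneg _, Real.sq_sqrt (by positivity)⟩
  have htr : s ^ 2 + t ^ 2 ≤ 1 := by
    have := (Complex.le_def.1 h.trace_nonneg).1
    simp [Matrix.trace, Fin.sum_univ_two, Matrix.mul_apply, Q] at this
    nlinarith
  have hdt : 0 ≤ 1 - 2 * (s ^ 2 + t ^ 2) + (s ^ 2 - t ^ 2) ^ 2 := by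
    have := (Complex.le_def.1 h.det_nonneg).1
    simp [Matrix.det_fin_two, Fin.sum_univ_two, Matrix.mul_apply, Q] at this
    rw [hs2, ht2]
    linear_combination this + (4 * (a * a' + b * b' + p * p' + d * d')) * horth
  have hst : s + t ≤ 1 := by
    by_contra hcon
    push Not at hcon
    have h1 : 1 - (s + t) ^ 2 < 0 := by nlinarith
    have h2 : 0 ≤ (1 - (s + t) ^ 2) * (1 - (s - t) ^ 2) := by nlinarith
    have h3 : 1 - (s - t) ^ 2 ≤ 0 := by
      by_contra h4
      push Not at h4
      nlinarith
    nlinarith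
  have e : blk 1 X = blk s ((starRingEnd ℂ) c • Q a b p d) +
      blk t (((starRingEnd ℂ) c * Complex.I) • Q a' b' p' d') + blk (1 - s - t) 0 := by
    rw [← blk_add, ← blk_add, add_zero, ← hX']
    congr 1; ring
  rw [e]
  refine add_mem (add_mem (blk_Q_mem _ _ _ _ _ hs hs2 _ ?_) (blk_Q_mem _ _ _ _ _ ht ht2 _ ?_))
    (blk_one_mem _ (by linarith))
  · simpa using hc
  · simp; linarith

section
open scoped Matrix.Norms.L2Operator MatrixOrder

lemma psd_of_norm (D : M4) (hD : D.IsHermitian) (h : opNorm D ≤ 1 / 8) :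
    (D + ((1 / 8 : ℝ) : ℂ) • 1).PosSemidef := by
  have h' : ‖D‖ ≤ 1 / 8 := h
  have h1 := IsSelfAdjoint.neg_algebraMap_norm_le_self (a := D) hD
  rw [Matrix.le_iff] at h1
  have h2 : (((1 / 8 - ‖D‖ : ℝ) : ℂ) • (1 : M4)).PosSemidef :=
    Matrix.PosSemidef.one.smul (by exact_mod_cast (by linarith : (0 : ℝ) ≤ 1 / 8 - ‖D‖))
  have h3 := h1.add h2
  have e : D + ((1 / 8 : ℝ) : ℂ) • (1 : M4) =
      D - -(algebraMap ℝ M4) ‖D‖ + ((1 / 8 - ‖D‖ : ℝ) : ℂ) • (1 : M4) := by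
    rw [Algebra.algebraMap_eq_smul_one]
    ext i j
    simp
    ring
  rw [e]; exact h3

lemma psd_of_norm' (D : M4) (h : opNorm D ≤ 1 / 8) :
    (((1 / 64 : ℝ) : ℂ) • 1 - Dᴴ * D).PosSemidef := by
  have h' : ‖D‖ ≤ 1 / 8 := h
  have h1 := CStarAlgebra.star_mul_le_algebraMap_norm_sq (a := D)
  rw [Matrix.le_iff] at h1
  have h2 : (((1 / 64 - ‖D‖ ^ 2 : ℝ) : ℂ) • (1 : M4)).PosSemidef :=
    Matrix.PosSemidef.one.smul
      (by exact_mod_cast (by nlinarith [norm_nonneg D] : (0 : ℝ) ≤ 1 / 64 - ‖D‖ ^ 2))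
  have h3 := h1.add h2
  have e : ((1 / 64 : ℝ) : ℂ) • (1 : M4) - Dᴴ * D =
      (algebraMap ℝ M4) (‖D‖ ^ 2) - star D * D + ((1 / 64 - ‖D‖ ^ 2 : ℝ) : ℂ) • (1 : M4) := by
    rw [Algebra.algebraMap_eq_smul_one, Matrix.star_eq_conjTranspose]
    ext i j
    simp
    ring
  rw [e]; exact h3

end

lemma smul_mem_cone {ρ : M4} (t : ℝ) (ht : 0 ≤ t) (h : ρ ∈ cone) : (t : ℂ) • ρ ∈ cone := by
  induction h using AddSubmonoid.closure_induction with
  | mem x hx =>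
    obtain ⟨a, b, ha, hb, rfl⟩ := hx
    have : (t : ℂ) • kron a b = kron ((t : ℂ) • a) b := by
      ext x y; simp [kron]; ring
    rw [this]
    exact kron_mem (ha.smul (by exact_mod_cast ht)) hb
  | zero => simp
  | add x y _ _ hx hy => rw [smul_add]; exact add_mem hx hy

end SepBall

open SepBall

theorem two_qubit_separability_ball
    (σ : Matrix (Fin 2 × Fin 2) (Fin 2 × Fin 2) ℂ) (hσ : QIT.DensityMatrix σ)
    (h : QIT.opNorm (σ - ((1 / 4 : ℝ) : ℂ) • 1) ≤ 1 / 8) :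
    QIT.Separable σ := by
  set D : M4 := σ - ((1 / 4 : ℝ) : ℂ) • 1 with hD
  have hσH : σ.IsHermitian := hσ.1.1
  have hDH : D.IsHermitian := by
    refine hσH.sub ?_
    ext i j
    simp only [Matrix.conjTranspose_apply, Matrix.smul_apply, Matrix.one_apply, eq_comm (a := j)]
    split_ifs <;> simp
  have h1 := psd_of_norm D hDH h
  have h2 := psd_of_norm' D h
  have hX : (1 - (((8 : ℝ) : ℂ) • σ.submatrix (fun j : Fin 2 => ((0 : Fin 2), j))
        (fun j : Fin 2 => ((1 : Fin 2), j)))ᴴ *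
      (((8 : ℝ) : ℂ) • σ.submatrix (fun j : Fin 2 => ((0 : Fin 2), j))
        (fun j : Fin 2 => ((1 : Fin 2), j)))).PosSemidef := by
    have h3 := ((h2.submatrix (fun j : Fin 2 => ((1 : Fin 2), j))).add
      (Matrix.posSemidef_conjTranspose_mul_self
        (D.submatrix (fun j : Fin 2 => ((1 : Fin 2), j)) (fun j : Fin 2 => ((1 : Fin 2), j))))).smul
      (by exact_mod_cast (by norm_num : (0 : ℝ) ≤ 64) : (0 : ℂ) ≤ ((64 : ℝ) : ℂ))
    convert h3 using 1
    ext i j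
    simp [Matrix.mul_apply, Fintype.sum_prod_type, Fin.sum_univ_two, hD, Matrix.one_apply]
    split_ifs <;> ring
  refine sep_of_cone ?_ hσ.2
  have hb := smul_mem_cone (1 / 8) (by norm_num) (blk_contraction_mem _ hX)
  have hP : (!![1, 0; 0, 0] : M2).PosSemidef :=
    psd_of_sq (k := 1) one_pos (by ext i j; fin_cases i <;> fin_cases j <;> simp)
      (by ext i j; fin_cases i <;> fin_cases j <;> simp)
  have hQ : (!![0, 0; 0, 1] : M2).PosSemidef :=
    psd_of_sq (k := 1) one_pos (by ext i j; fin_cases i <;> fin_cases j <;> simp)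
      (by ext i j; fin_cases i <;> fin_cases j <;> simp)
  have hall := add_mem (add_mem hb (kron_mem hP (h1.submatrix (fun j : Fin 2 => ((0 : Fin 2), j)))))
    (kron_mem hQ (h1.submatrix (fun j : Fin 2 => ((1 : Fin 2), j))))
  convert hall using 1
  ext ⟨i, j⟩ ⟨k, l⟩
  have hs := hσH.apply (i, j) (k, l)
  fin_cases i <;> fin_cases j <;> fin_cases k <;> fin_cases l <;>
    simp [blk, QIT.kron, hD, Matrix.one_apply] at hs ⊢ <;> grind

end
end

section
/- Let ρ be a density matrix on A ⊗ B and suppose that for every unit vector ψ ∈ A ⊗ B of Schmidt rank at most 2, |⟨ψ|ρ|ψ⟩ − 1/(d_A d_B)| ≤ 2δ/(d_A d_B) with δ ≤ 1/10. Then for all rank-2 projectors P on A and Q on B, the state σ = (P⊗Q)ρ(P⊗Q)/Tr((P⊗Q)ρ) satisfies ‖σ − (1/4)(P⊗Q)‖_∞ ≤ 1/8, and hence σ is separable; in particular ρ is not one-copy distillable. -/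
open scoped BigOperators ComplexOrder
open Matrix

noncomputable section

/-- One-copy (pseudo-)distillability: some local rank-2 compression of `ρ` is NPT. -/
def OneCopyDistillable {dA dB : ℕ}
    (ρ : Matrix (Fin dA × Fin dB) (Fin dA × Fin dB) ℂ) : Prop :=
  ∃ (P : Matrix (Fin dA) (Fin dA) ℂ) (Q : Matrix (Fin dB) (Fin dB) ℂ),
    QIT.Projector P ∧ P.rank = 2 ∧ QIT.Projector Q ∧ Q.rank = 2 ∧
    ¬ (QIT.ptransposeB (((1 / ((QIT.kron P Q * ρ).trace).re : ℝ) : ℂ) •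
        (QIT.kron P Q * ρ * QIT.kron P Q))).PosSemidef

open Kronecker

lemma aux_isometry {d : ℕ} (P : Matrix (Fin d) (Fin d) ℂ) (hP : QIT.Projector P)
    (hr : P.rank = 2) : ∃ V : Matrix (Fin d) (Fin 2) ℂ, V * Vᴴ = P ∧ Vᴴ * V = 1 := by
  obtain ⟨hH, hPP⟩ := hP
  have hcard : Fintype.card {i // hH.eigenvalues i ≠ 0} = Fintype.card (Fin 2) := by
    rw [← hH.rank_eq_card_non_zero_eigs, hr]; simp
  let e := Fintype.equivOfCardEq hcard
  set U : Matrix (Fin d) (Fin d) ℂ := (hH.eigenvectorUnitary : Matrix (Fin d) (Fin d) ℂ) with hU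
  have hUU : Uᴴ * U = 1 := by
    have := Unitary.coe_star_mul_self hH.eigenvectorUnitary
    simpa [hU, Matrix.star_eq_conjTranspose] using this
  set D : Matrix (Fin d) (Fin d) ℂ :=
    diagonal (RCLike.ofReal ∘ hH.eigenvalues : Fin d → ℂ) with hD
  have hspec : P = U * D * Uᴴ := by
    have := hH.spectral_theorem
    rw [Unitary.conjStarAlgAut_apply] at this
    simpa [Matrix.star_eq_conjTranspose, hU, hD] using this
  have hDP : Uᴴ * P * U = D := by
    rw [hspec]
    calc Uᴴ * (U * D * Uᴴ) * U = (Uᴴ * U) * D * (Uᴴ * U) := by simp only [Matrix.mul_assoc]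
      _ = D := by rw [hUU]; simp
  have hUU' : U * Uᴴ = 1 := mul_eq_one_comm.mp hUU
  have hDD : D * D = D := by
    calc D * D = Uᴴ * P * (U * Uᴴ) * P * U := by rw [← hDP]; simp only [Matrix.mul_assoc]
      _ = Uᴴ * (P * P) * U := by rw [hUU']; simp only [Matrix.mul_assoc, Matrix.mul_one]
      _ = D := by rw [hPP, hDP]
  have heig : ∀ i, hH.eigenvalues i ≠ 0 → hH.eigenvalues i = 1 := by
    intro i hi
    have h1 := congrFun (congrFun hDD i) i
    rw [hD, diagonal_mul_diagonal, diagonal_apply_eq, diagonal_apply_eq] at h1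
    simp only [Function.comp] at h1
    have h2 : hH.eigenvalues i * hH.eigenvalues i = hH.eigenvalues i := by
      exact_mod_cast h1
    exact mul_left_cancel₀ hi (by rw [h2, mul_one])
  refine ⟨U.submatrix id (fun k => (e.symm k : Fin d)), ?_, ?_⟩
  · refine Eq.trans ?_ hspec.symm
    ext i j
    rw [Matrix.mul_apply, Matrix.mul_apply]
    simp only [hD, mul_diagonal, submatrix_apply, conjTranspose_apply, id,
      Function.comp]
    rw [Equiv.sum_comp e.symm (fun k : {i // hH.eigenvalues i ≠ 0} => U i k * star (U j k))]
    have h1 : ∀ k, U i k * (RCLike.ofReal (hH.eigenvalues k) : ℂ) * star (U j k) =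
        if hH.eigenvalues k ≠ 0 then U i k * star (U j k) else 0 := by
      intro k
      by_cases hk : hH.eigenvalues k = 0
      · simp [hk]
      · simp [heig k hk]
    simp_rw [h1]
    rw [← Finset.sum_filter]
    exact (Finset.sum_subtype _ (by simp) (fun k => U i k * star (U j k))).symm
  · ext k l
    have := congrFun (congrFun hUU (e.symm k)) (e.symm l)
    simp only [Matrix.mul_apply, conjTranspose_apply, submatrix_apply, id] at this ⊢
    rw [this]
    by_cases hkl : k = l
    · subst hkl
      rw [Matrix.one_apply_eq, Matrix.one_apply_eq]
    · have : (e.symm k : Fin d) ≠ e.symm l := fun h => hkl (e.symm.injective (Subtype.ext h))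
      rw [Matrix.one_apply_ne this, Matrix.one_apply_ne hkl]

def SepCone {m n : Type*} (M : Matrix (m × n) (m × n) ℂ) : Prop :=
  ∃ (k : ℕ) (a : Fin k → Matrix m m ℂ) (b : Fin k → Matrix n n ℂ),
    (∀ l, (a l).PosSemidef) ∧ (∀ l, (b l).PosSemidef) ∧ M = ∑ l, a l ⊗ₖ b l

lemma SepCone.kron {m n : Type*} {a : Matrix m m ℂ} {b : Matrix n n ℂ} (ha : a.PosSemidef)
    (hb : b.PosSemidef) : SepCone (a ⊗ₖ b) :=
  ⟨1, fun _ => a, fun _ => b, fun _ => ha, fun _ => hb, by simp⟩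

lemma SepCone.zero {m n : Type*} : SepCone (0 : Matrix (m × n) (m × n) ℂ) :=
  ⟨0, fun _ => 0, fun _ => 0, fun l => l.elim0, fun l => l.elim0, by simp⟩

lemma SepCone.add {m n : Type*} {M N : Matrix (m × n) (m × n) ℂ} (hM : SepCone M)
    (hN : SepCone N) : SepCone (M + N) := by
  obtain ⟨k, a, b, ha, hb, rfl⟩ := hM
  obtain ⟨k', a', b', ha', hb', rfl⟩ := hN
  refine ⟨k + k', Fin.append a a', Fin.append b b', ?_, ?_, ?_⟩
  · intro l; refine Fin.addCases (fun i => ?_) (fun i => ?_) l <;> simp [ha, ha']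
  · intro l; refine Fin.addCases (fun i => ?_) (fun i => ?_) l <;> simp [hb, hb']
  · simp [Fin.sum_univ_add]

lemma SepCone.smul {m n : Type*} {M : Matrix (m × n) (m × n) ℂ} (hM : SepCone M)
    {t : ℝ} (ht : 0 ≤ t) : SepCone ((t : ℂ) • M) := by
  obtain ⟨k, a, b, ha, hb, rfl⟩ := hM
  refine ⟨k, fun l => (t : ℂ) • a l, b, fun l => (ha l).smul (by exact_mod_cast ht), hb, ?_⟩
  simp [Finset.smul_sum, Matrix.smul_kronecker]

lemma SepCone.sum {m n ι : Type*} (s : Finset ι) (f : ι → Matrix (m × n) (m × n) ℂ)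
    (hf : ∀ i ∈ s, SepCone (f i)) : SepCone (∑ i ∈ s, f i) := by
  classical
  induction s using Finset.induction_on with
  | empty => simpa using SepCone.zero
  | insert i s his ih =>
    rw [Finset.sum_insert his]
    exact (hf _ (by simp)).add (ih fun j hj => hf j (by simp [hj]))

lemma SepCone.conj {m n m' n' : Type*} [Fintype m] [Fintype n] [Fintype m'] [Fintype n']
    {M : Matrix (m × n) (m × n) ℂ} (hM : SepCone M)
    (V : Matrix m' m ℂ) (W : Matrix n' n ℂ) : SepCone ((V ⊗ₖ W) * M * (V ⊗ₖ W)ᴴ) := by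
  obtain ⟨k, a, b, ha, hb, rfl⟩ := hM
  refine ⟨k, fun l => V * a l * Vᴴ, fun l => W * b l * Wᴴ,
    fun l => (ha l).mul_mul_conjTranspose_same V, fun l => (hb l).mul_mul_conjTranspose_same W, ?_⟩
  simp [Matrix.mul_sum, Matrix.sum_mul, Matrix.conjTranspose_kronecker, Matrix.mul_kronecker_mul]

lemma aux_normalize {d : ℕ} (hd : 0 < d) (a : Matrix (Fin d) (Fin d) ℂ) (ha : a.PosSemidef) :
    ∃ (t : ℝ) (a' : Matrix (Fin d) (Fin d) ℂ), 0 ≤ t ∧ (a'.PosSemidef ∧ a'.trace = 1) ∧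
      a = (t : ℂ) • a' := by
  have htr := ha.trace_nonneg
  obtain ⟨hre, him⟩ := Complex.le_def.mp htr
  simp only [Complex.zero_re, Complex.zero_im] at hre him
  have htr' : a.trace = ((a.trace.re : ℝ) : ℂ) := by
    apply Complex.ext <;> simp [← him]
  by_cases h0 : a.trace = 0
  · have : a = 0 := ha.trace_eq_zero_iff.mp h0
    refine ⟨0, Matrix.diagonal (Pi.single ⟨0, hd⟩ 1), le_rfl, ⟨?_, ?_⟩, by simp [this]⟩
    · apply Matrix.PosSemidef.diagonal
      intro i
      by_cases h : i = ⟨0, hd⟩ <;> simp [h]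
    · simp [Matrix.trace_diagonal]
  · refine ⟨a.trace.re, ((a.trace.re⁻¹ : ℝ) : ℂ) • a, hre, ⟨?_, ?_⟩, ?_⟩
    · exact ha.smul (by exact_mod_cast inv_nonneg.mpr hre)
    · rw [Matrix.trace_smul, smul_eq_mul, Complex.ofReal_inv, ← htr', inv_mul_cancel₀ h0]
    · rw [smul_smul, Complex.ofReal_inv, ← htr', mul_inv_cancel₀ h0, one_smul]

lemma aux_kron {dA dB : ℕ} (P : Matrix (Fin dA) (Fin dA) ℂ) (Q : Matrix (Fin dB) (Fin dB) ℂ) :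
    QIT.kron P Q = P ⊗ₖ Q := by
  ext i j; simp [QIT.kron, Matrix.kroneckerMap_apply]

lemma SepCone.separable {dA dB : ℕ} (hA : 0 < dA) (hB : 0 < dB)
    {M : Matrix (Fin dA × Fin dB) (Fin dA × Fin dB) ℂ} (hM : SepCone M) (ht : M.trace = 1) :
    QIT.Separable M := by
  obtain ⟨k, a, b, ha, hb, rfl⟩ := hM
  choose t a' ht0 ha' hat using fun l => aux_normalize hA (a l) (ha l)
  choose u b' hu0 hb' hbu using fun l => aux_normalize hB (b l) (hb l)
  refine ⟨k, fun l => t l * u l, a', b', fun l => mul_nonneg (ht0 l) (hu0 l), ?_, ha', hb', ?_⟩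
  · have : ((∑ l, t l * u l : ℝ) : ℂ) = 1 := by
      rw [← ht, Matrix.trace_sum]
      push_cast
      refine Finset.sum_congr rfl fun l _ => ?_
      rw [Matrix.trace_kronecker, hat l, hbu l, Matrix.trace_smul, Matrix.trace_smul,
        (ha' l).2, (hb' l).2]
      simp
    exact_mod_cast this
  · refine Finset.sum_congr rfl fun l _ => ?_
    rw [aux_kron]
    conv_lhs => rw [hat l, hbu l]
    rw [Matrix.smul_kronecker, Matrix.kronecker_smul, smul_smul]
    push_cast
    rfl

lemma Separable.ppt {dA dB : ℕ}
    {M : Matrix (Fin dA × Fin dB) (Fin dA × Fin dB) ℂ} (hM : QIT.Separable M) :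
    (QIT.ptransposeB M).PosSemidef := by
  obtain ⟨k, p, a, b, hp, -, ha, hb, rfl⟩ := hM
  have : QIT.ptransposeB (∑ l, (p l : ℂ) • QIT.kron (a l) (b l)) =
      ∑ l, (p l : ℂ) • (a l ⊗ₖ (b l)ᵀ) := by
    ext i j
    simp [QIT.ptransposeB, QIT.kron, Matrix.sum_apply, Matrix.kroneckerMap_apply]
  rw [this]
  refine Matrix.posSemidef_sum _ fun l _ => ?_
  exact ((ha l).1.kronecker (hb l).1.transpose).smul (by exact_mod_cast hp l)

/-- The Pauli matrices. -/
def pauli : Fin 4 → Matrix (Fin 2) (Fin 2) ℂ :=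
  ![1, !![0, 1; 1, 0], !![0, -Complex.I; Complex.I, 0], !![1, 0; 0, -1]]

lemma pauli_herm (i : Fin 4) : (pauli i)ᴴ = pauli i := by
  fin_cases i <;> ext a b <;> fin_cases a <;> fin_cases b <;> simp [pauli]

lemma pauli_sq (i : Fin 4) : pauli i * pauli i = 1 := by
  fin_cases i <;> ext a b <;> fin_cases a <;> fin_cases b <;>
    simp [pauli]

lemma aux_psd_of_idem {n : Type*} [Fintype n] [DecidableEq n] (s : Matrix n n ℂ) (h : sᴴ = s)
    (h2 : s * s = 1) : (1 + s).PosSemidef := by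
  have h3 : 1 + s = (((1 / 2 : ℝ) : ℂ)) • ((1 + s)ᴴ * (1 + s)) := by
    have : (1 + s)ᴴ * (1 + s) = (2 : ℂ) • (1 + s) := by
      rw [conjTranspose_add, h, conjTranspose_one, add_mul, mul_add, mul_add, h2]
      simp only [one_mul, mul_one, two_smul]
      abel
    rw [this, smul_smul]
    norm_num
  rw [h3]
  refine (posSemidef_conjTranspose_mul_self (1 + s)).smul ?_
  exact_mod_cast (by norm_num : (0 : ℝ) ≤ 1 / 2)

lemma pauli_add_psd (i : Fin 4) : (1 + pauli i).PosSemidef :=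
  aux_psd_of_idem _ (pauli_herm i) (pauli_sq i)

lemma pauli_sub_psd (i : Fin 4) : (1 - pauli i).PosSemidef := by
  rw [sub_eq_add_neg]
  exact aux_psd_of_idem _ (by rw [conjTranspose_neg, pauli_herm]) (by rw [neg_mul_neg, pauli_sq])

lemma SepCone.pauli_pair (c : ℝ) (i j : Fin 4) :
    SepCone (((|c| : ℝ) : ℂ) • (1 : Matrix (Fin 2 × Fin 2) (Fin 2 × Fin 2) ℂ) +
      (c : ℂ) • (pauli i ⊗ₖ pauli j)) := by
  rw [← Matrix.one_kronecker_one]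
  rcases le_total 0 c with hc | hc
  · rw [abs_of_nonneg hc]
    have := ((SepCone.kron (pauli_add_psd i) (pauli_add_psd j)).add
      (SepCone.kron (pauli_sub_psd i) (pauli_sub_psd j))).smul (t := c / 2) (by linarith)
    convert this using 1
    ext x y
    simp only [Matrix.kroneckerMap_apply, Matrix.add_apply, Matrix.sub_apply, Matrix.smul_apply,
      smul_eq_mul]
    push_cast
    ring
  · rw [abs_of_nonpos hc]
    have := ((SepCone.kron (pauli_add_psd i) (pauli_sub_psd j)).add
      (SepCone.kron (pauli_sub_psd i) (pauli_add_psd j))).smul (t := -c / 2) (by linarith)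
    convert this using 1
    ext x y
    simp only [Matrix.kroneckerMap_apply, Matrix.add_apply, Matrix.sub_apply, Matrix.smul_apply,
      smul_eq_mul]
    push_cast
    ring

set_option maxHeartbeats 2000000 in
lemma pauli_expand (τ : Matrix (Fin 2 × Fin 2) (Fin 2 × Fin 2) ℂ) :
    (4 : ℂ) • τ = ∑ p : Fin 4 × Fin 4,
      (τ * (pauli p.1 ⊗ₖ pauli p.2)).trace • (pauli p.1 ⊗ₖ pauli p.2) := by
  have hI : Complex.I * Complex.I = -1 := Complex.I_mul_I
  ext ⟨a, b⟩ ⟨a', b'⟩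
  fin_cases a <;> fin_cases b <;> fin_cases a' <;> fin_cases b' <;>
    simp [Matrix.sum_apply, Fintype.sum_prod_type, Fin.sum_univ_succ, pauli, Matrix.trace,
      Matrix.mul_apply, Matrix.kroneckerMap_apply] <;>
    ring_nf <;> simp only [Complex.I_sq] <;> ring

lemma SepCone.of_trace_sq (τ : Matrix (Fin 2 × Fin 2) (Fin 2 × Fin 2) ℂ) (hτ : τᴴ = τ)
    (h1 : τ.trace = 1) (h2 : (τ * τ).trace.re ≤ 25 / 96) : SepCone τ := by
  set S : Fin 4 × Fin 4 → Matrix (Fin 2 × Fin 2) (Fin 2 × Fin 2) ℂ :=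
    fun p => pauli p.1 ⊗ₖ pauli p.2 with hS
  set c : Fin 4 × Fin 4 → ℝ := fun p => (τ * S p).trace.re with hc
  have hcS : ∀ p, (τ * S p).trace = (c p : ℂ) := by
    intro p
    have : star (τ * S p).trace = (τ * S p).trace := by
      rw [← Matrix.trace_conjTranspose, conjTranspose_mul, hτ, hS]
      simp only [conjTranspose_kronecker, pauli_herm]
      rw [Matrix.trace_mul_comm]
    exact (Complex.conj_eq_iff_re.mp this).symm
  have hexp : (4 : ℂ) • τ = ∑ p, (c p : ℂ) • S p := by
    rw [pauli_expand]
    exact Finset.sum_congr rfl fun p _ => by rw [← hcS]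
  have hsq : 4 * (τ * τ).trace.re = ∑ p, c p ^ 2 := by
    have : (4 : ℂ) * (τ * τ).trace = ((∑ p, c p ^ 2 : ℝ) : ℂ) := by
      rw [← smul_eq_mul, ← Matrix.trace_smul, ← Matrix.mul_smul, hexp, Matrix.mul_sum,
        Matrix.trace_sum]
      push_cast
      refine Finset.sum_congr rfl fun p _ => ?_
      rw [Matrix.mul_smul, Matrix.trace_smul, hcS, smul_eq_mul, sq]
    have := congrArg Complex.re this
    rw [Complex.ofReal_re] at this
    rw [← this]
    simp
  have hS0 : S (0, 0) = 1 := by simp [hS, pauli]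
  have hc0 : c (0, 0) = 1 := by simp [hc, hS0, h1]
  set s : Finset (Fin 4 × Fin 4) := Finset.univ.erase (0, 0) with hs
  have hsum : ∑ p, c p ^ 2 = ∑ p ∈ s, c p ^ 2 + 1 := by
    rw [← Finset.sum_erase_add _ _ (Finset.mem_univ (0, 0)), hc0, one_pow]
  have hcard : s.card = 15 := by simp [hs]
  have habs : ∑ p ∈ s, |c p| ≤ 1 := by
    have : ∑ p ∈ s, |c p| ≤ ∑ p ∈ s, (10 * c p ^ 2 + 1 / 40) := by
      refine Finset.sum_le_sum fun p _ => ?_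
      have := sq_abs (c p)
      nlinarith [sq_nonneg (20 * |c p| - 1)]
    rw [Finset.sum_add_distrib, ← Finset.mul_sum, Finset.sum_const, hcard] at this
    norm_num at this
    linarith
  have hfin : (4 : ℂ) • τ = (∑ p ∈ s, (((|c p| : ℝ) : ℂ) • 1 + (c p : ℂ) • S p)) +
      ((1 - ∑ p ∈ s, |c p| : ℝ) : ℂ) • 1 := by
    rw [hexp, ← Finset.sum_erase_add _ _ (Finset.mem_univ (0, 0)), hc0, hS0,
      Finset.sum_add_distrib, ← Finset.sum_smul]
    push_cast
    rw [sub_smul]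
    abel
  have h4 : SepCone ((4 : ℂ) • τ) := by
    rw [hfin]
    refine SepCone.add (SepCone.sum _ _ fun p _ => SepCone.pauli_pair _ _ _) ?_
    refine SepCone.smul ?_ (by linarith)
    rw [← Matrix.one_kronecker_one]
    exact SepCone.kron PosSemidef.one PosSemidef.one
  have := h4.smul (t := 1 / 4) (by norm_num)
  rw [smul_smul] at this
  norm_num at this
  exact this

open scoped MatrixOrder in
lemma aux_trace_mul {n : Type*} [Fintype n] [DecidableEq n] {A B : Matrix n n ℂ}
    (hA : A.PosSemidef) (hB : B.PosSemidef) : 0 ≤ (A * B).trace.re := by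
  obtain ⟨X, rfl⟩ := CStarAlgebra.nonneg_iff_eq_star_mul_self.mp hA.nonneg
  rw [Matrix.mul_assoc, Matrix.trace_mul_comm, Matrix.star_eq_conjTranspose]
  exact (Complex.le_def.mp (hB.mul_mul_conjTranspose_same X).trace_nonneg).1

lemma aux_opNorm {n : Type*} [Fintype n] [DecidableEq n] (N : Matrix n n ℂ) {r : ℝ} (hr : 0 ≤ r)
    (h : (Nᴴ * N).trace.re ≤ r ^ 2) : QIT.opNorm N ≤ r := by
  refine ContinuousLinearMap.opNorm_le_bound _ hr fun x => ?_
  have hF : (Nᴴ * N).trace.re = ∑ i, ∑ j, ‖N i j‖ ^ 2 := by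
    rw [Finset.sum_comm]
    simp [Matrix.trace, Matrix.mul_apply, ← Complex.normSq_eq_norm_sq, Complex.normSq_apply]
  refine le_of_sq_le_sq ?_ (by positivity) 
  rw [mul_pow, EuclideanSpace.norm_sq_eq, EuclideanSpace.norm_sq_eq]
  calc _ ≤ ∑ i, (∑ j, ‖N i j‖ ^ 2) * ∑ j, ‖x j‖ ^ 2 := by
        refine Finset.sum_le_sum fun i _ => ?_
        rw [ofLp_toEuclideanCLM]
        refine le_trans ?_ (Finset.sum_mul_sq_le_sq_mul_sq _ _ _)
        refine pow_le_pow_left₀ (norm_nonneg _) ?_ 2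
        simp only [Matrix.mulVec, dotProduct]
        refine (norm_sum_le _ _).trans (le_of_eq ?_)
        simp
    _ = (∑ i, ∑ j, ‖N i j‖ ^ 2) * ∑ j, ‖x j‖ ^ 2 := by rw [Finset.sum_mul]
    _ ≤ _ := by
        rw [← hF]
        exact mul_le_mul_of_nonneg_right h (by positivity)

lemma aux_tau (M : Matrix (Fin 2 × Fin 2) (Fin 2 × Fin 2) ℂ) (c : ℝ) (hc : 0 < c)
    (hM : M.IsHermitian)
    (h1 : (M - ((4 / 5 * c : ℝ) : ℂ) • 1).PosSemidef)
    (h2 : (((6 / 5 * c : ℝ) : ℂ) • 1 - M).PosSemidef) :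
    0 < M.trace.re ∧ M.trace = (M.trace.re : ℂ) ∧
      (M * M).trace.re ≤ 25 / 96 * M.trace.re ^ 2 := by
  have ht1 : (1 : Matrix (Fin 2 × Fin 2) (Fin 2 × Fin 2) ℂ).trace = 4 := by
    rw [Matrix.trace_one]; simp [show (2 : ℂ) * 2 = 4 by norm_num]
  have h3 := (Complex.le_def.mp h1.trace_nonneg).1
  have h4 := aux_trace_mul h1 h2
  rw [Matrix.trace_sub, Matrix.trace_smul, ht1] at h3
  have hexp : (M - ((4 / 5 * c : ℝ) : ℂ) • 1) * (((6 / 5 * c : ℝ) : ℂ) • 1 - M) =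
      ((2 * c : ℝ) : ℂ) • M - ((24 / 25 * c ^ 2 : ℝ) : ℂ) • 1 - M * M := by
    simp only [sub_mul, mul_sub, smul_mul_assoc, mul_smul_comm, one_mul, mul_one]
    ext i j
    simp only [Matrix.sub_apply, Matrix.smul_apply, smul_eq_mul]
    push_cast
    ring
  rw [hexp, Matrix.trace_sub, Matrix.trace_sub, Matrix.trace_smul, Matrix.trace_smul, ht1] at h4
  simp only [Complex.sub_re, smul_eq_mul, Complex.re_ofReal_mul, Complex.zero_re] at h3 h4
  norm_num at h3 h4
  refine ⟨by linarith, ?_, ?_⟩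
  · have : star M.trace = M.trace := by
      rw [← Matrix.trace_conjTranspose, hM]
    exact (Complex.conj_eq_iff_re.mp this).symm
  · nlinarith [sq_nonneg (M.trace.re - 3.84 * c)]

lemma aux_trace_pure {n : Type*} [Fintype n] [DecidableEq n] (ρ : Matrix n n ℂ)
    (ψ : EuclideanSpace ℂ n) :
    (ρ * QIT.pureDM ψ).trace = star (ψ : n → ℂ) ⬝ᵥ (ρ *ᵥ (ψ : n → ℂ)) := by
  simp only [Matrix.trace, Matrix.mul_apply, Matrix.diag, QIT.pureDM, Matrix.of_apply, dotProduct,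
    Matrix.mulVec, Finset.mul_sum, Pi.star_apply]
  refine Finset.sum_congr rfl fun i _ => Finset.sum_congr rfl fun j _ => ?_
  rw [starRingEnd_apply]
  ring

lemma aux_rank {dA dB : ℕ} (V : Matrix (Fin dA) (Fin 2) ℂ) (W : Matrix (Fin dB) (Fin 2) ℂ)
    (φ : Fin 2 × Fin 2 → ℂ) :
    (QIT.ptraceB (QIT.pureDM (WithLp.toLp 2 ((V ⊗ₖ W) *ᵥ φ)))).rank ≤ 2 := by
  set Φ : Matrix (Fin 2) (Fin 2) ℂ := Matrix.of fun a b => φ (a, b) with hΦ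
  set Ψ := V * (Φ * Wᵀ) with hΨ
  have h1 : ∀ a b, ((V ⊗ₖ W) *ᵥ φ) (a, b) = Ψ a b := by
    intro a b
    simp only [hΨ, hΦ, Matrix.mul_apply, Matrix.mulVec, dotProduct, Matrix.kroneckerMap_apply,
      Fintype.sum_prod_type, Matrix.transpose_apply, Matrix.of_apply, Finset.mul_sum]
    refine Finset.sum_congr rfl fun i _ => Finset.sum_congr rfl fun j _ => ?_
    ring
  have h2 : QIT.ptraceB (QIT.pureDM (WithLp.toLp 2 ((V ⊗ₖ W) *ᵥ φ))) = V * (Φ * Wᵀ * Ψᴴ) := by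
    rw [← Matrix.mul_assoc, ← hΨ]
    ext a a'
    simp [QIT.ptraceB, QIT.pureDM, h1, Matrix.mul_apply]
  rw [h2]
  exact (Matrix.rank_mul_le_left _ _).trans (by simpa using Matrix.rank_le_width V)

lemma aux_norm_iso {m n : Type*} [Fintype m] [Fintype n] [DecidableEq n]
    (K : Matrix m n ℂ) (hK : Kᴴ * K = 1) (x : n → ℂ) :
    star (K *ᵥ x) ⬝ᵥ (K *ᵥ x) = star x ⬝ᵥ x := by
  rw [Matrix.star_mulVec, ← Matrix.dotProduct_mulVec, Matrix.mulVec_mulVec, hK, Matrix.one_mulVec]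

lemma aux_norm_sq {n : Type*} [Fintype n] (x : n → ℂ) :
    star x ⬝ᵥ x = ((‖(WithLp.toLp 2 x : EuclideanSpace ℂ n)‖ ^ 2 : ℝ) : ℂ) := by
  rw [EuclideanSpace.norm_sq_eq]
  simp only [dotProduct, Pi.star_apply]
  push_cast
  refine Finset.sum_congr rfl fun i _ => ?_
  exact Complex.conj_mul' (x i)

lemma aux_core (dA dB : ℕ) (hA : 2 ≤ dA) (hB : 2 ≤ dB)
    (ρ : Matrix (Fin dA × Fin dB) (Fin dA × Fin dB) ℂ) (hρ : QIT.DensityMatrix ρ)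
    (δ : ℝ) (hδ : δ ≤ 1 / 10)
    (h : ∀ ψ : EuclideanSpace ℂ (Fin dA × Fin dB), ‖ψ‖ = 1 →
      (QIT.ptraceB (QIT.pureDM ψ)).rank ≤ 2 →
      |((ρ * QIT.pureDM ψ).trace).re - 1 / ((dA : ℝ) * dB)| ≤ 2 * δ / ((dA : ℝ) * dB))
    (V : Matrix (Fin dA) (Fin 2) ℂ) (W : Matrix (Fin dB) (Fin 2) ℂ)
    (hK : (V ⊗ₖ W)ᴴ * (V ⊗ₖ W) = 1) (x : Fin 2 × Fin 2 → ℂ) :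
    |(star x ⬝ᵥ (((V ⊗ₖ W)ᴴ * ρ * (V ⊗ₖ W)) *ᵥ x)).re -
      1 / ((dA : ℝ) * dB) * (star x ⬝ᵥ x).re| ≤ 1 / 5 * (1 / ((dA : ℝ) * dB)) * (star x ⬝ᵥ x).re := by
  have hc : 0 < 1 / ((dA : ℝ) * dB) := by
    have : (0 : ℝ) < dA := by exact_mod_cast (by omega : 0 < dA)
    have : (0 : ℝ) < dB := by exact_mod_cast (by omega : 0 < dB)
    positivity
  set K := V ⊗ₖ W with hKdef
  set r : ℝ := ‖(WithLp.toLp 2 x : EuclideanSpace ℂ (Fin 2 × Fin 2))‖ with hr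
  have hxx : (star x ⬝ᵥ x).re = r ^ 2 := by rw [aux_norm_sq, Complex.ofReal_re]
  have hform : star x ⬝ᵥ ((Kᴴ * ρ * K) *ᵥ x) = star (K *ᵥ x) ⬝ᵥ (ρ *ᵥ (K *ᵥ x)) := by
    rw [Matrix.star_mulVec, ← Matrix.dotProduct_mulVec, Matrix.mulVec_mulVec, Matrix.mulVec_mulVec]
  rw [hform, hxx]
  by_cases h0 : r = 0
  · have : x = 0 := by
      have := norm_eq_zero.mp (hr ▸ h0)
      simpa using this
    subst this
    simp [h0]
  have hrpos : 0 < r := lt_of_le_of_ne (norm_nonneg _) (Ne.symm h0)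
  set y : Fin 2 × Fin 2 → ℂ := ((r⁻¹ : ℝ) : ℂ) • x with hy
  have hxy : K *ᵥ x = (r : ℂ) • (K *ᵥ y) := by
    rw [hy, Matrix.mulVec_smul, smul_smul, ← Complex.ofReal_mul, mul_inv_cancel₀ h0]; simp
  set ψ : EuclideanSpace ℂ (Fin dA × Fin dB) := WithLp.toLp 2 (K *ᵥ y) with hψ
  have hyy : star y ⬝ᵥ y = 1 := by
    rw [hy, star_smul, smul_dotProduct, dotProduct_smul, aux_norm_sq, ← hr]
    simp only [smul_eq_mul, Complex.star_def, Complex.conj_ofReal]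
    rw [← Complex.ofReal_mul, ← Complex.ofReal_mul]
    norm_cast
    field_simp
  have hn : ‖ψ‖ = 1 := by
    have h1 := aux_norm_iso K hK y
    rw [hyy, aux_norm_sq] at h1
    have h2 : ‖ψ‖ ^ 2 = 1 := by exact_mod_cast h1
    nlinarith [norm_nonneg ψ]
  have h3 := h ψ hn (aux_rank V W y)
  rw [aux_trace_pure] at h3
  change |(star (K *ᵥ y) ⬝ᵥ (ρ *ᵥ (K *ᵥ y))).re - _| ≤ _ at h3
  clear hn
  clear_value y
  have h4 : star (K *ᵥ x) ⬝ᵥ (ρ *ᵥ (K *ᵥ x)) =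
      ((r ^ 2 : ℝ) : ℂ) * (star (K *ᵥ y) ⬝ᵥ (ρ *ᵥ (K *ᵥ y))) := by
    rw [hxy, star_smul, smul_dotProduct, Matrix.mulVec_smul, dotProduct_smul]
    simp only [smul_eq_mul, Complex.star_def, Complex.conj_ofReal]
    push_cast
    ring
  rw [h4, Complex.re_ofReal_mul]
  rw [show r ^ 2 * (star (K *ᵥ y) ⬝ᵥ (ρ *ᵥ (K *ᵥ y))).re - 1 / ((dA : ℝ) * dB) * r ^ 2 =
    r ^ 2 * ((star (K *ᵥ y) ⬝ᵥ (ρ *ᵥ (K *ᵥ y))).re - 1 / ((dA : ℝ) * dB)) by ring, abs_mul,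
    abs_of_nonneg (sq_nonneg r)]
  rw [mul_comm (1 / 5 * (1 / ((dA : ℝ) * dB)))]
  refine mul_le_mul_of_nonneg_left (h3.trans ?_) (sq_nonneg r)
  have : 2 * δ / ((dA : ℝ) * dB) = 2 * δ * (1 / ((dA : ℝ) * dB)) := by ring
  rw [this]
  exact mul_le_mul_of_nonneg_right (by linarith) hc.le

lemma aux_main (dA dB : ℕ) (hA : 2 ≤ dA) (hB : 2 ≤ dB)
    (ρ : Matrix (Fin dA × Fin dB) (Fin dA × Fin dB) ℂ) (hρ : QIT.DensityMatrix ρ)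
    (δ : ℝ) (hδ : δ ≤ 1 / 10)
    (h : ∀ ψ : EuclideanSpace ℂ (Fin dA × Fin dB), ‖ψ‖ = 1 →
      (QIT.ptraceB (QIT.pureDM ψ)).rank ≤ 2 →
      |((ρ * QIT.pureDM ψ).trace).re - 1 / ((dA : ℝ) * dB)| ≤ 2 * δ / ((dA : ℝ) * dB))
    (P : Matrix (Fin dA) (Fin dA) ℂ) (Q : Matrix (Fin dB) (Fin dB) ℂ)
    (hP : QIT.Projector P) (hPr : P.rank = 2) (hQ : QIT.Projector Q) (hQr : Q.rank = 2) :
      QIT.opNorm (((1 / ((QIT.kron P Q * ρ).trace).re : ℝ) : ℂ) •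
            (QIT.kron P Q * ρ * QIT.kron P Q) - ((1 / 4 : ℝ) : ℂ) • QIT.kron P Q) ≤ 1 / 8 ∧
      QIT.Separable (((1 / ((QIT.kron P Q * ρ).trace).re : ℝ) : ℂ) •
            (QIT.kron P Q * ρ * QIT.kron P Q)) := by
  obtain ⟨V, hV, hV'⟩ := aux_isometry P hP hPr
  obtain ⟨W, hW, hW'⟩ := aux_isometry Q hQ hQr
  have hc : 0 < 1 / ((dA : ℝ) * dB) := by
    have : (0 : ℝ) < dA := by exact_mod_cast (by omega : 0 < dA)
    have : (0 : ℝ) < dB := by exact_mod_cast (by omega : 0 < dB)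
    positivity
  have hK : (V ⊗ₖ W)ᴴ * (V ⊗ₖ W) = 1 := by
    rw [conjTranspose_kronecker, ← Matrix.mul_kronecker_mul, hV', hW', Matrix.one_kronecker_one]
  have hPQ : QIT.kron P Q = (V ⊗ₖ W) * (V ⊗ₖ W)ᴴ := by
    rw [aux_kron, conjTranspose_kronecker, ← Matrix.mul_kronecker_mul, hV, hW]
  have hcore := aux_core dA dB hA hB ρ hρ δ hδ h V W hK
  have hconj : ∀ {M : Matrix (Fin 2 × Fin 2) (Fin 2 × Fin 2) ℂ}, SepCone M → SepCone ((V ⊗ₖ W) * M * (V ⊗ₖ W)ᴴ) := fun hM => hM.conj V W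
  generalize V ⊗ₖ W = K at hK hPQ hcore hconj
  set c : ℝ := 1 / ((dA : ℝ) * dB) with hcdef
  set M := Kᴴ * ρ * K with hMdef
  have hMpsd : M.PosSemidef := hρ.1.conjTranspose_mul_mul_same K
  have hMH := hMpsd.isHermitian
  have him : ∀ x, (star x ⬝ᵥ (M *ᵥ x)).im = 0 := fun x => hMH.im_star_dotProduct_mulVec_self x
  have him1 : ∀ x : Fin 2 × Fin 2 → ℂ, (star x ⬝ᵥ x).im = 0 := fun x => by
    rw [aux_norm_sq, Complex.ofReal_im]
  have hsm : ∀ t : ℝ, ((t : ℂ) • (1 : Matrix (Fin 2 × Fin 2) (Fin 2 × Fin 2) ℂ)).IsHermitian := by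
    intro t
    rw [Matrix.IsHermitian, conjTranspose_smul, conjTranspose_one]
    simp
  obtain ⟨hT0, hTr, hT2⟩ := aux_tau M c hc hMH
    (by
      refine PosSemidef.of_dotProduct_mulVec_nonneg (hMH.sub (hsm _)) fun x => ?_
      have := abs_le.mp (hcore x)
      rw [Matrix.sub_mulVec, Matrix.smul_mulVec, Matrix.one_mulVec, dotProduct_sub,
        dotProduct_smul, Complex.le_def]
      constructor
      · simp only [Complex.sub_re, smul_eq_mul, Complex.re_ofReal_mul, Complex.zero_re]
        linarith [this.1]
      · simp only [Complex.sub_im, smul_eq_mul, Complex.im_ofReal_mul, Complex.zero_im, him, him1]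
        simp)
    (by
      refine PosSemidef.of_dotProduct_mulVec_nonneg ((hsm _).sub hMH) fun x => ?_
      have := abs_le.mp (hcore x)
      rw [Matrix.sub_mulVec, Matrix.smul_mulVec, Matrix.one_mulVec, dotProduct_sub,
        dotProduct_smul, Complex.le_def]
      constructor
      · simp only [Complex.sub_re, smul_eq_mul, Complex.re_ofReal_mul, Complex.zero_re]
        linarith [this.2]
      · simp only [Complex.sub_im, smul_eq_mul, Complex.im_ofReal_mul, Complex.zero_im, him, him1]
        simp)
  have htr : (QIT.kron P Q * ρ).trace = M.trace := by
    rw [hPQ, hMdef, Matrix.mul_assoc, Matrix.trace_mul_comm]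
  rw [htr]
  set T := M.trace.re with hTdef
  set τ : Matrix (Fin 2 × Fin 2) (Fin 2 × Fin 2) ℂ := ((1 / T : ℝ) : ℂ) • M with hτ
  have hσ : ((1 / T : ℝ) : ℂ) • (QIT.kron P Q * ρ * QIT.kron P Q) = K * τ * Kᴴ := by
    rw [hτ, hPQ, hMdef, Matrix.mul_smul, Matrix.smul_mul]
    simp only [Matrix.mul_assoc]
  have hτH : τᴴ = τ := by
    rw [hτ, conjTranspose_smul, hMH]
    simp
  have hτ1 : τ.trace = 1 := by
    rw [hτ, Matrix.trace_smul, hTr, smul_eq_mul, ← Complex.ofReal_mul]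
    norm_cast
    field_simp
  have hτ2 : (τ * τ).trace.re ≤ 25 / 96 := by
    rw [hτ, Matrix.smul_mul, Matrix.mul_smul, Matrix.trace_smul, Matrix.trace_smul, smul_eq_mul,
      smul_eq_mul, Complex.re_ofReal_mul, Complex.re_ofReal_mul]
    calc 1 / T * (1 / T * (M * M).trace.re) = (M * M).trace.re / T ^ 2 := by field_simp
      _ ≤ 25 / 96 := by rw [div_le_iff₀ (by positivity)]; exact hT2
  have hcyc : ∀ N : Matrix (Fin 2 × Fin 2) (Fin 2 × Fin 2) ℂ, (K * N * Kᴴ).trace = N.trace := by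
    intro N
    rw [Matrix.mul_assoc, Matrix.trace_mul_comm, Matrix.mul_assoc, hK, Matrix.mul_one]
  rw [hσ]
  clear_value τ
  refine ⟨?_, ?_⟩
  · set N := τ - ((1 / 4 : ℝ) : ℂ) • (1 : Matrix (Fin 2 × Fin 2) (Fin 2 × Fin 2) ℂ) with hN
    have hNH : Nᴴ = N := by
      rw [hN, conjTranspose_sub, hτH, hsm]
    have hKN : K * τ * Kᴴ - ((1 / 4 : ℝ) : ℂ) • QIT.kron P Q = K * N * Kᴴ := by
      rw [hPQ, hN, Matrix.mul_sub, Matrix.sub_mul, Matrix.mul_smul, Matrix.smul_mul, Matrix.mul_one]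
    rw [hKN]
    refine aux_opNorm _ (by norm_num) ?_
    have h1 : (K * N * Kᴴ)ᴴ * (K * N * Kᴴ) = K * (N * N) * Kᴴ := by
      rw [conjTranspose_mul, conjTranspose_mul, hNH, conjTranspose_conjTranspose]
      calc K * (N * Kᴴ) * (K * N * Kᴴ) = K * N * (Kᴴ * K) * N * Kᴴ := by
            simp only [Matrix.mul_assoc]
        _ = _ := by rw [hK]; simp only [Matrix.mul_assoc, Matrix.one_mul]
    rw [h1, hcyc]
    have h2 : N * N = τ * τ - ((1 / 2 : ℝ) : ℂ) • τ + ((1 / 16 : ℝ) : ℂ) • 1 := by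
      rw [hN]
      simp only [sub_mul, mul_sub, smul_mul_assoc, mul_smul_comm, one_mul, mul_one]
      ext i j
      simp only [Matrix.sub_apply, Matrix.add_apply, Matrix.smul_apply, smul_eq_mul]
      push_cast
      ring
    have ht1 : (1 : Matrix (Fin 2 × Fin 2) (Fin 2 × Fin 2) ℂ).trace = 4 := by
      rw [Matrix.trace_one]; simp [show (2 : ℂ) * 2 = 4 by norm_num]
    rw [h2, Matrix.trace_add, Matrix.trace_sub, Matrix.trace_smul, Matrix.trace_smul, hτ1, ht1]
    simp only [Complex.sub_re, Complex.add_re, smul_eq_mul, Complex.re_ofReal_mul]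
    norm_num
    linarith
  · refine SepCone.separable (by omega) (by omega) (hconj (SepCone.of_trace_sq τ hτH hτ1 hτ2)) ?_
    rw [hcyc, hτ1]

theorem not_one_copy_distillable (dA dB : ℕ) (hA : 2 ≤ dA) (hB : 2 ≤ dB)
    (ρ : Matrix (Fin dA × Fin dB) (Fin dA × Fin dB) ℂ) (hρ : QIT.DensityMatrix ρ)
    (δ : ℝ) (hδ0 : 0 ≤ δ) (hδ : δ ≤ 1 / 10)
    (h : ∀ ψ : EuclideanSpace ℂ (Fin dA × Fin dB), ‖ψ‖ = 1 →
      (QIT.ptraceB (QIT.pureDM ψ)).rank ≤ 2 →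
      |((ρ * QIT.pureDM ψ).trace).re - 1 / ((dA : ℝ) * dB)| ≤ 2 * δ / ((dA : ℝ) * dB)) :
    (∀ (P : Matrix (Fin dA) (Fin dA) ℂ) (Q : Matrix (Fin dB) (Fin dB) ℂ),
      QIT.Projector P → P.rank = 2 → QIT.Projector Q → Q.rank = 2 →
      QIT.opNorm (((1 / ((QIT.kron P Q * ρ).trace).re : ℝ) : ℂ) •
            (QIT.kron P Q * ρ * QIT.kron P Q) - ((1 / 4 : ℝ) : ℂ) • QIT.kron P Q) ≤ 1 / 8 ∧
      QIT.Separable (((1 / ((QIT.kron P Q * ρ).trace).re : ℝ) : ℂ) •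
            (QIT.kron P Q * ρ * QIT.kron P Q))) ∧
    ¬ OneCopyDistillable ρ := by
  have key := aux_main dA dB hA hB ρ hρ δ hδ h
  refine ⟨key, ?_⟩
  rintro ⟨P, Q, hP, hPr, hQ, hQr, hn⟩
  exact hn (Separable.ppt (key P Q hP hPr hQ hQr).2)

end
end
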